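/- arXiv:2510.06032 — 3 statements merged into one kernel-verified Lean document; each statement's English description precedes it below -/
import Mathlib

section
/- Fix an integer k ≥ 1 (first moment bound). For every real c < (1/(k + 1)) · √(π/2) · (k!)^{1/k} there exists N such that for all integers n ≥ N the following holds: if M ≥ 0 is an integer and (a_1, …, a_n) is an M-bounded distinct subset sum sequence in ℤ^k, then M ≥ c · 2^{n/k} / √n. (Equivalently, M ≥ (1 + o(1)) · (1/(k+1)) · √(π/2) · (2^{n/k}/√n) · (k!)^{1/k} as n → ∞.) -/
/-!
Fix `n` vectors in `ℤ^k` with distinct subset sums and consider the `2 ^ n` signed sums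
`∑ i, ± a i`. They are distinct and congruent modulo `2`, and on each class modulo `2` the map
`x ↦ if x < 0 then |x| - 1 else |x|` is injective, so they can be folded into `2 ^ n` distinct
points of `ℕ^k` without increasing any absolute value. Since only `(r + k).choose k` points of `ℕ^k`
have coordinate sum at most `r`, the average `ℓ¹` norm of the signed sums is at least about
`k / (k + 1) * (k! * 2 ^ n) ^ (1 / k)`.

Conversely, each coordinate of a signed sum has average absolute value at most `M` times that of the
`n`-step simple random walk, by convexity in each `a i j`, and the latter is at most
`√(2 * (n + 2) / π)` by Wallis' inequality. Comparing the two averages bounds `M` from below.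
-/

open Finset Filter Topology

section LatticePoints

variable {α ι : Type*} [Fintype ι] {s : Finset α} {f : α → ι → ℕ}

theorem card_filter_sum_le_le_choose (hf : Set.InjOn f s) (r : ℕ) :
    #{a ∈ s | ∑ i, f a i ≤ r} ≤ (r + Fintype.card ι).choose (Fintype.card ι) := by
  classical
  -- The slack `r - ∑ i, f a i` becomes an extra coordinate, making the coordinate sum exactly `r`.
  let g (a : α) : Option ι →₀ ℕ :=
    Finsupp.equivFunOnFinite.symm fun o ↦ o.elim (r - ∑ i, f a i) (f a)
  have hg_mapsTo : Set.MapsTo g ↑({a ∈ s | ∑ i, f a i ≤ r})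
      (finsuppAntidiag univ r : Finset (Option ι →₀ ℕ)) := by
    intro a ha
    have hle : ∑ i, f a i ≤ r := (mem_filter.1 ha).2
    simp [g, Fintype.sum_option, Nat.sub_add_cancel hle]
  have hg_injOn : Set.InjOn g ↑({a ∈ s | ∑ i, f a i ≤ r}) := by
    intro a ha b hb hab
    refine hf (mem_filter.1 ha).1 (mem_filter.1 hb).1 (funext fun i ↦ ?_)
    simpa [g] using DFunLike.congr_fun hab (some i)
  calc #{a ∈ s | ∑ i, f a i ≤ r}
      ≤ #(finsuppAntidiag (univ : Finset (Option ι)) r) :=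
        card_le_card_of_injOn g hg_mapsTo hg_injOn
    _ = (r + Fintype.card ι).choose (Fintype.card ι) := by
      rw [card_finsuppAntidiag_nat_eq_choose, card_univ, Fintype.card_option,
        Nat.add_right_comm, Nat.add_sub_cancel, add_comm, Nat.choose_symm_add]

theorem sum_sub_sum_le_choose (hf : Set.InjOn f s) (R : ℕ) :
    ∑ a ∈ s, (R - ∑ i, f a i) ≤ (R + Fintype.card ι).choose (Fintype.card ι + 1) := by
  calc ∑ a ∈ s, (R - ∑ i, f a i)
      = ∑ a ∈ s, #{r ∈ range R | ∑ i, f a i ≤ r} := by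
        refine sum_congr rfl fun a _ ↦ ?_
        rw [← Nat.card_Ico]
        congr 1
        grind
    _ = ∑ r ∈ range R, #{a ∈ s | ∑ i, f a i ≤ r} :=
        sum_card_bipartiteAbove_eq_sum_card_bipartiteBelow fun a r ↦ ∑ i, f a i ≤ r
    _ ≤ ∑ r ∈ range R, (r + Fintype.card ι).choose (Fintype.card ι) :=
        sum_le_sum fun r _ ↦ card_filter_sum_le_le_choose hf r
    _ = (R + Fintype.card ι).choose (Fintype.card ι + 1) := by
        cases R with
        | zero => simp
        | succ R => rw [Nat.sum_range_add_choose, Nat.add_right_comm]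

theorem mul_card_le_choose_add_sum (hf : Set.InjOn f s) (R : ℕ) :
    R * #s ≤ (R + Fintype.card ι).choose (Fintype.card ι + 1) + ∑ a ∈ s, ∑ i, f a i := by
  calc R * #s = ∑ _a ∈ s, R := by rw [sum_const, smul_eq_mul, mul_comm]
    _ ≤ ∑ a ∈ s, ((R - ∑ i, f a i) + ∑ i, f a i) := sum_le_sum fun a _ ↦ le_tsub_add
    _ = ∑ a ∈ s, (R - ∑ i, f a i) + ∑ a ∈ s, ∑ i, f a i := sum_add_distrib
    _ ≤ _ := by gcongr; exact sum_sub_sum_le_choose hf R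

end LatticePoints

theorem exists_sub_le_and_choose_le_pow_div {T : ℝ} (hT : 0 ≤ T) (k : ℕ) :
    ∃ R : ℕ, T - (k + 1) ≤ R ∧ ((R + k).choose (k + 1) : ℝ) ≤ T ^ (k + 1) / (k + 1).factorial := by
  refine ⟨⌊T⌋₊ - k, ?_, ?_⟩
  · have hsub : (⌊T⌋₊ : ℝ) ≤ (⌊T⌋₊ - k : ℕ) + k := by exact_mod_cast le_tsub_add
    linarith [Nat.lt_floor_add_one T]
  · rcases le_total k ⌊T⌋₊ with hk | hk
    · rw [Nat.sub_add_cancel hk]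
      refine (Nat.choose_le_pow_div _ _).trans ?_
      gcongr
      exact Nat.floor_le hT
    · rw [Nat.sub_eq_zero_of_le hk, zero_add, Nat.choose_succ_self, Nat.cast_zero]
      positivity

section ParityFold

/-- The folding of `ℤ` onto `ℕ` sending `x` to `|x|` if `0 ≤ x` and to `|x| - 1` if `x < 0`. The
shift by one moves the negative integers of a class modulo `2` to the other class, so that they do
not collide with the nonnegative ones. -/
def parityFold (x : ℤ) : ℕ := if x < 0 then x.natAbs - 1 else x.natAbs

theorem parityFold_le_natAbs (x : ℤ) : parityFold x ≤ x.natAbs := by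
  unfold parityFold
  split_ifs <;> omega

theorem eq_of_modEq_two_of_parityFold_eq {x y : ℤ} (hxy : x ≡ y [ZMOD 2])
    (h : parityFold x = parityFold y) : x = y := by
  unfold parityFold at h
  unfold Int.ModEq at hxy
  split_ifs at h <;> omega

theorem mul_card_le_choose_add_sum_natAbs {α ι : Type*} [Fintype ι] {s : Finset α} {f : α → ι → ℤ}
    (hf : Set.InjOn f s) (hmod : ∀ a ∈ s, ∀ b ∈ s, ∀ i, f a i ≡ f b i [ZMOD 2]) (R : ℕ) :
    R * #s ≤
      (R + Fintype.card ι).choose (Fintype.card ι + 1) + ∑ a ∈ s, ∑ i, (f a i).natAbs := by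
  have hinj : Set.InjOn (fun a i ↦ parityFold (f a i)) s := fun a ha b hb hab ↦
    hf ha hb (funext fun i ↦ eq_of_modEq_two_of_parityFold_eq (hmod a ha b hb i) (congrFun hab i))
  refine (mul_card_le_choose_add_sum hinj R).trans ?_
  gcongr
  exact parityFold_le_natAbs _

end ParityFold

section SignedSum

variable {ι : Type*} [DecidableEq ι] {s A : Finset ι} {x : ι}

/-- The signed sum `∑ i ∈ s, ± f i` whose set of plus signs is `A`; meant for `A ⊆ s`. As `A` runs
through `s.powerset`, it takes the values of the random walk with independent steps `± f i`. -/
def signedSum {G : Type*} [AddCommGroup G] (s : Finset ι) (f : ι → G) (A : Finset ι) : G :=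
  ∑ i ∈ A, f i - ∑ i ∈ s \ A, f i

section AddCommGroup

variable {G : Type*} [AddCommGroup G]

theorem signedSum_eq_two_nsmul_sub (hA : A ⊆ s) (f : ι → G) :
    signedSum s f A = 2 • ∑ i ∈ A, f i - ∑ i ∈ s, f i := by
  rw [signedSum, ← sum_sdiff hA]
  abel

theorem signedSum_insert_of_subset (hx : x ∉ s) (hA : A ⊆ s) (f : ι → G) :
    signedSum (insert x s) f A = signedSum s f A - f x := by
  have hxA : x ∉ A := fun h ↦ hx (hA h)
  rw [signedSum, signedSum, insert_sdiff_of_notMem _ hxA, sum_insert (by simp [hx])]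
  abel

theorem signedSum_insert_insert (hx : x ∉ s) (hA : A ⊆ s) (f : ι → G) :
    signedSum (insert x s) f (insert x A) = signedSum s f A + f x := by
  have hxA : x ∉ A := fun h ↦ hx (hA h)
  rw [signedSum, signedSum, sum_insert hxA, insert_sdiff_insert, sdiff_insert_of_notMem hx]
  abel

theorem signedSum_apply {κ : Type*} (s : Finset ι) (f : ι → κ → G) (A : Finset ι) (j : κ) :
    signedSum s f A j = signedSum s (fun i ↦ f i j) A := by
  simp only [signedSum, Pi.sub_apply, Finset.sum_apply]

end AddCommGroup

section LinearOrderedRing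

variable {R : Type*} [CommRing R] [LinearOrder R] [IsStrictOrderedRing R]

theorem abs_sub_add_abs_add_le {y z : R} (h : |y| ≤ |z|) (x : R) :
    |x - y| + |x + y| ≤ |x - z| + |x + z| := by
  rcases abs_cases y with hy | hy <;> rcases abs_cases z with hz | hz <;>
  rcases abs_cases (x - y) with h₁ | h₁ <;> rcases abs_cases (x + y) with h₂ | h₂ <;>
  linarith [le_abs_self (x - z), le_abs_self (x + z), neg_le_abs (x - z), neg_le_abs (x + z)]

theorem sum_abs_add_signedSum_le {f g : ι → R} (h : ∀ i ∈ s, |f i| ≤ |g i|) (x : R) :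
    ∑ A ∈ s.powerset, |x + signedSum s f A| ≤ ∑ A ∈ s.powerset, |x + signedSum s g A| := by
  induction s using Finset.induction_on generalizing x with
  | empty => simp [signedSum]
  | insert i s hi ih =>
    have hs : ∀ j ∈ s, |f j| ≤ |g j| := fun j hj ↦ h j (mem_insert_of_mem hj)
    have sum_insert_eq (e : ι → R) : ∑ A ∈ (insert i s).powerset, |x + signedSum (insert i s) e A| =
        ∑ A ∈ s.powerset, |x - e i + signedSum s e A| +
          ∑ A ∈ s.powerset, |x + e i + signedSum s e A| := by
      rw [sum_powerset_insert hi]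
      congr 1 <;> refine sum_congr rfl fun A hA ↦ ?_
      · rw [signedSum_insert_of_subset hi (mem_powerset.1 hA)]
        ring_nf
      · rw [signedSum_insert_insert hi (mem_powerset.1 hA)]
        ring_nf
    rw [sum_insert_eq, sum_insert_eq]
    calc ∑ A ∈ s.powerset, |x - f i + signedSum s f A| +
          ∑ A ∈ s.powerset, |x + f i + signedSum s f A|
        ≤ ∑ A ∈ s.powerset, |x - f i + signedSum s g A| +
          ∑ A ∈ s.powerset, |x + f i + signedSum s g A| := add_le_add (ih hs _) (ih hs _)
      _ = ∑ A ∈ s.powerset, (|x + signedSum s g A - f i| + |x + signedSum s g A + f i|) := by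
        rw [← sum_add_distrib]
        ring_nf
      _ ≤ ∑ A ∈ s.powerset, (|x + signedSum s g A - g i| + |x + signedSum s g A + g i|) :=
        sum_le_sum fun A _ ↦ abs_sub_add_abs_add_le (h i (mem_insert_self i s)) _
      _ = ∑ A ∈ s.powerset, |x - g i + signedSum s g A| +
          ∑ A ∈ s.powerset, |x + g i + signedSum s g A| := by
        rw [← sum_add_distrib]
        ring_nf

theorem sum_abs_signedSum_le {f : ι → R} {M : R} (h : ∀ i ∈ s, |f i| ≤ |M|) :
    ∑ A ∈ s.powerset, |signedSum s f A| ≤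
      |M| * ∑ j ∈ range (#s + 1), ((#s).choose j : R) * |(#s : R) - 2 * j| := by
  calc ∑ A ∈ s.powerset, |signedSum s f A|
      ≤ ∑ A ∈ s.powerset, |signedSum s (fun _ ↦ M) A| := by
        simpa only [zero_add] using sum_abs_add_signedSum_le (g := fun _ ↦ M) h 0
    _ = ∑ A ∈ s.powerset, |M| * |(#s : R) - 2 * #A| := by
        refine sum_congr rfl fun A hA ↦ ?_
        rw [signedSum_eq_two_nsmul_sub (mem_powerset.1 hA), sum_const, sum_const, abs_sub_comm,
          ← abs_mul]
        simp only [nsmul_eq_mul]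
        push_cast
        ring_nf
    _ = |M| * ∑ j ∈ range (#s + 1), ((#s).choose j : R) * |(#s : R) - 2 * j| := by
        rw [← mul_sum, sum_powerset_apply_card fun j ↦ |(#s : R) - 2 * j|]
        simp only [nsmul_eq_mul]

end LinearOrderedRing

end SignedSum

section RandomWalk

theorem sum_range_choose_mul_sub_two_mul (n t : ℕ) :
    ∑ j ∈ range t, (n.choose j : ℤ) * (n - 2 * j) = t * n.choose t := by
  induction t with
  | zero => simp
  | succ t ih =>
    rw [sum_range_succ, ih]
    rcases le_or_gt t n with ht | ht
    · have hchoose := Nat.choose_succ_right_eq n t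
      zify [ht] at hchoose
      push_cast
      linear_combination -hchoose
    · simp [Nat.choose_eq_zero_of_lt ht, Nat.choose_eq_zero_of_lt (ht.trans (Nat.lt_succ_self t))]

theorem sum_range_choose_mul_abs_sub_two_mul (n : ℕ) :
    ∑ j ∈ range (n + 1), (n.choose j : ℤ) * |(n : ℤ) - 2 * j| =
      2 * ((n / 2 + 1) * n.choose (n / 2 + 1) : ℕ) := by
  have sum_eq_zero : ∑ j ∈ range (n + 1), (n.choose j : ℤ) * (n - 2 * j) = 0 := by
    simp [sum_range_choose_mul_sub_two_mul]
  have sum_max_eq : ∑ j ∈ range (n + 1), (n.choose j : ℤ) * max ((n : ℤ) - 2 * j) 0 =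
      ((n / 2 + 1) * n.choose (n / 2 + 1) : ℕ) := by
    rw [Nat.cast_mul, ← sum_range_choose_mul_sub_two_mul]
    symm
    calc ∑ j ∈ range (n / 2 + 1), (n.choose j : ℤ) * (n - 2 * j)
        = ∑ j ∈ range (n / 2 + 1), (n.choose j : ℤ) * max ((n : ℤ) - 2 * j) 0 := by
          refine sum_congr rfl fun j hj ↦ ?_
          rw [max_eq_left (by grind)]
      _ = ∑ j ∈ range (n + 1), (n.choose j : ℤ) * max ((n : ℤ) - 2 * j) 0 := by
          refine sum_subset (by grind) fun j _ hj ↦ ?_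
          rw [max_eq_right (by grind), mul_zero]
  calc ∑ j ∈ range (n + 1), (n.choose j : ℤ) * |(n : ℤ) - 2 * j|
      = ∑ j ∈ range (n + 1),
          (2 * ((n.choose j : ℤ) * max ((n : ℤ) - 2 * j) 0) - n.choose j * (n - 2 * j)) := by
        refine sum_congr rfl fun j _ ↦ ?_
        rcases abs_cases ((n : ℤ) - 2 * j) with ⟨habs, h⟩ | ⟨habs, h⟩
        · rw [habs, max_eq_left h]; ring
        · rw [habs, max_eq_right h.le]; ring
    _ = 2 * ((n / 2 + 1) * n.choose (n / 2 + 1) : ℕ) := by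
        rw [sum_sub_distrib, ← mul_sum, sum_max_eq, sum_eq_zero, sub_zero]

theorem centralBinom_sq_mul_eq_inv_wallis (m : ℕ) :
    (m.centralBinom : ℝ) ^ 2 * (2 * m + 1) = (4 ^ m) ^ 2 * (Real.Wallis.W m)⁻¹ := by
  have hpow : (2 : ℝ) ^ (4 * m) = (4 ^ m) ^ 2 := by
    rw [← pow_mul, mul_comm m 2, show (4 : ℝ) = 2 ^ 2 by norm_num, ← pow_mul]
    ring_nf
  rw [Real.Wallis.W_eq_factorial_ratio, hpow, Nat.centralBinom, two_mul m, Nat.cast_add_choose]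
  field_simp

theorem two_mul_add_one_mul_centralBinom_le (m : ℕ) :
    (2 * m + 1) * (m.centralBinom : ℝ) ≤ 4 ^ m * √(2 * (2 * m + 2) / Real.pi) := by
  have hW := Real.Wallis.W_pos m
  have two_mul_add_one_le : (2 * m + 1 : ℝ) ≤ Real.Wallis.W m * (2 * (2 * m + 2) / Real.pi) := by
    calc (2 * m + 1 : ℝ)
        = (2 * m + 1) / (2 * m + 2) * (Real.pi / 2) * (2 * (2 * m + 2) / Real.pi) := by field_simp
      _ ≤ Real.Wallis.W m * (2 * (2 * m + 2) / Real.pi) := by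
        gcongr
        exact Real.Wallis.le_W m
  rw [← Real.sqrt_sq (show (0 : ℝ) ≤ 4 ^ m by positivity), ← Real.sqrt_mul (by positivity)]
  apply Real.le_sqrt_of_sq_le
  calc ((2 * m + 1) * (m.centralBinom : ℝ)) ^ 2
      = m.centralBinom ^ 2 * (2 * m + 1) * (2 * m + 1) := by ring
    _ = (4 ^ m) ^ 2 * (Real.Wallis.W m)⁻¹ * (2 * m + 1) := by rw [centralBinom_sq_mul_eq_inv_wallis]
    _ ≤ (4 ^ m) ^ 2 * (Real.Wallis.W m)⁻¹ *
          (Real.Wallis.W m * (2 * (2 * m + 2) / Real.pi)) := by gcongr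
    _ = (4 ^ m) ^ 2 * (2 * (2 * m + 2) / Real.pi) := by field_simp

theorem sum_range_choose_mul_abs_sub_two_mul_le (n : ℕ) :
    ((∑ j ∈ range (n + 1), (n.choose j : ℤ) * |(n : ℤ) - 2 * j| : ℤ) : ℝ) ≤
      2 ^ n * √(2 * (n + 2) / Real.pi) := by
  rw [sum_range_choose_mul_abs_sub_two_mul]
  obtain ⟨m, rfl | rfl⟩ := n.even_or_odd'
  · have hchoose : (m + 1) * (2 * m).choose (m + 1) = m * m.centralBinom := by
      rw [Nat.centralBinom, mul_comm, Nat.choose_succ_right_eq, mul_comm]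
      congr 1
      omega
    rw [Nat.mul_div_cancel_left m two_pos, hchoose, pow_mul]
    push_cast
    norm_num only
    linarith [two_mul_add_one_mul_centralBinom_le m, (m.centralBinom.cast_nonneg : (0 : ℝ) ≤ _)]
  · have hchoose : (m + 1) * (2 * m + 1).choose (m + 1) = (2 * m + 1) * m.centralBinom := by
      rw [Nat.centralBinom, mul_comm, ← Nat.add_one_mul_choose_eq]
    rw [show (2 * m + 1) / 2 = m by omega, hchoose, pow_succ, pow_mul]
    push_cast
    norm_num only
    calc 2 * ((2 * m + 1) * (m.centralBinom : ℝ))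
        ≤ 2 * (4 ^ m * √(2 * (2 * m + 2) / Real.pi)) := by
          linarith [two_mul_add_one_mul_centralBinom_le m]
      _ ≤ 2 * (4 ^ m * √(2 * (2 * m + 1 + 2) / Real.pi)) := by
          gcongr
          linarith
      _ = 4 ^ m * 2 * √(2 * (2 * m + 1 + 2) / Real.pi) := by ring

end RandomWalk

section DistinctSubsetSums

variable {ι κ : Type*} [Fintype ι] [Fintype κ] {M : ℕ} {a : ι → κ → ℤ}

theorem sum_sum_natAbs_signedSum_le [DecidableEq ι] (ha : ∀ i j, |a i j| ≤ M) :
    ((∑ A : Finset ι, ∑ j, (signedSum univ a A j).natAbs : ℕ) : ℝ) ≤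
      2 ^ Fintype.card ι *
        (Fintype.card κ * (M * √(2 * (Fintype.card ι + 2) / Real.pi))) := by
  have hcoord (j : κ) : ∑ A : Finset ι, |signedSum univ a A j| ≤
      M * ∑ l ∈ range (Fintype.card ι + 1),
        ((Fintype.card ι).choose l : ℤ) * |(Fintype.card ι : ℤ) - 2 * l| := by
    have ha' : ∀ i ∈ univ, |a i j| ≤ |(M : ℤ)| := fun i _ ↦ (ha i j).trans (le_abs_self _)
    simpa only [signedSum_apply, powerset_univ, card_univ, Nat.abs_cast] using
      sum_abs_signedSum_le ha'
  have hint : ((∑ A : Finset ι, ∑ j, (signedSum univ a A j).natAbs : ℕ) : ℤ) ≤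
      Fintype.card κ * (M * ∑ l ∈ range (Fintype.card ι + 1),
        ((Fintype.card ι).choose l : ℤ) * |(Fintype.card ι : ℤ) - 2 * l|) := by
    rw [sum_comm]
    push_cast
    simpa using sum_le_sum fun j (_ : j ∈ univ) ↦ hcoord j
  calc ((∑ A : Finset ι, ∑ j, (signedSum univ a A j).natAbs : ℕ) : ℝ)
      ≤ Fintype.card κ * (M * ((∑ l ∈ range (Fintype.card ι + 1),
          ((Fintype.card ι).choose l : ℤ) * |(Fintype.card ι : ℤ) - 2 * l| : ℤ) : ℝ)) := by
        have hreal := (Int.cast_le (R := ℝ)).2 hint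
        push_cast [Nat.cast_natAbs] at hreal ⊢
        exact hreal
    _ ≤ Fintype.card κ * (M *
          (2 ^ Fintype.card ι * √(2 * (Fintype.card ι + 2) / Real.pi))) := by
        gcongr
        exact sum_range_choose_mul_abs_sub_two_mul_le _
    _ = _ := by ring

theorem two_pow_card_mul_le_of_injective_sum (ha : ∀ i j, |a i j| ≤ M)
    (hinj : Function.Injective fun A : Finset ι ↦ ∑ i ∈ A, a i) (R : ℕ) :
    (2 : ℝ) ^ Fintype.card ι * R ≤ (R + Fintype.card κ).choose (Fintype.card κ + 1) +
      2 ^ Fintype.card ι * (Fintype.card κ * (M * √(2 * (Fintype.card ι + 2) / Real.pi))) := by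
  classical
  have signedSum_eq (A : Finset ι) (j : κ) :
      signedSum univ a A j = 2 * (∑ i ∈ A, a i) j - (∑ i, a i) j := by
    simp [signedSum_eq_two_nsmul_sub (subset_univ A)]
  have signedSum_injOn : Set.InjOn (signedSum univ a) ((univ : Finset (Finset ι)) : Set _) := by
    refine fun A _ B _ hAB ↦ hinj (funext fun j ↦ ?_)
    have hj := congrFun hAB j
    rw [signedSum_eq, signedSum_eq] at hj
    dsimp only
    omega
  have signedSum_modEq (A B : Finset ι) (j : κ) :
      signedSum univ a A j ≡ signedSum univ a B j [ZMOD 2] := by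
    rw [signedSum_eq, signedSum_eq, Int.ModEq]
    omega
  have hcount := mul_card_le_choose_add_sum_natAbs signedSum_injOn
    (fun A _ B _ ↦ signedSum_modEq A B) R
  rw [card_univ, Fintype.card_finset] at hcount
  calc (2 : ℝ) ^ Fintype.card ι * R
      ≤ (R + Fintype.card κ).choose (Fintype.card κ + 1) +
          ((∑ A : Finset ι, ∑ j, (signedSum univ a A j).natAbs : ℕ) : ℝ) := by
        rw [mul_comm]
        exact_mod_cast hcount
    _ ≤ _ := by
        gcongr
        exact sum_sum_natAbs_signedSum_le ha

theorem div_sub_le_mul_sqrt_of_injective_sum [Nonempty κ] (ha : ∀ i j, |a i j| ≤ M)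
    (hinj : Function.Injective fun A : Finset ι ↦ ∑ i ∈ A, a i) {T : ℝ} (hT : 0 ≤ T)
    (hT_pow : T ^ Fintype.card κ = (Fintype.card κ).factorial * 2 ^ Fintype.card ι) :
    T / (Fintype.card κ + 1) - (Fintype.card κ + 1) / Fintype.card κ ≤
      M * √(2 * (Fintype.card ι + 2) / Real.pi) := by
  have hk : (0 : ℝ) < Fintype.card κ := by exact_mod_cast Fintype.card_pos
  obtain ⟨R, hR, hchoose⟩ := exists_sub_le_and_choose_le_pow_div hT (Fintype.card κ)
  have hpow : T ^ (Fintype.card κ + 1) / (Fintype.card κ + 1).factorial =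
      2 ^ Fintype.card ι * (T / (Fintype.card κ + 1)) := by
    rw [pow_succ, hT_pow, Nat.factorial_succ]
    push_cast
    field_simp
  have hR_le : R ≤ T / (Fintype.card κ + 1) +
      Fintype.card κ * (M * √(2 * (Fintype.card ι + 2) / Real.pi)) := by
    refine le_of_mul_le_mul_left ?_ (show (0 : ℝ) < 2 ^ Fintype.card ι by positivity)
    rw [mul_add, ← hpow]
    exact (two_pow_card_mul_le_of_injective_sum ha hinj R).trans (by gcongr)
  refine le_of_mul_le_mul_left ?_ hk
  calc Fintype.card κ * (T / (Fintype.card κ + 1) - (Fintype.card κ + 1) / Fintype.card κ)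
      = T - (Fintype.card κ + 1) - T / (Fintype.card κ + 1) := by field_simp; ring
    _ ≤ Fintype.card κ * (M * √(2 * (Fintype.card ι + 2) / Real.pi)) := by linarith

end DistinctSubsetSums

theorem eventually_mul_div_sqrt_le {b c : ℝ} (hc : c < b * √(Real.pi / 2)) {q : ℕ → ℝ}
    (hq : Tendsto q atTop atTop) (d : ℝ) :
    ∀ᶠ n : ℕ in atTop, c * q n / √n ≤ (b * q n - d) / √(2 * (n + 2) / Real.pi) := by
  have hlim : Tendsto (fun n : ℕ ↦ (b - d / q n) * √(Real.pi / 2 * (n / (n + 2)))) atTop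
      (𝓝 (b * √(Real.pi / 2))) := by
    simpa using ((hq.const_div_atTop d).const_sub b).mul
      ((tendsto_natCast_div_add_atTop (2 : ℝ)).const_mul (Real.pi / 2)).sqrt
  filter_upwards [hlim.eventually_const_lt hc, hq.eventually_gt_atTop 0, eventually_gt_atTop 0]
    with n hcn hqn hn
  have hn' : (0 : ℝ) < n := by exact_mod_cast hn
  calc c * q n / √n ≤ (b - d / q n) * √(Real.pi / 2 * (n / (n + 2))) * q n / √n := by gcongr
    _ = (b - d / q n) * (√n / √(2 * (n + 2) / Real.pi)) * q n / √n := by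
      rw [← Real.sqrt_div hn'.le]
      congr 4
      field_simp
    _ = (b * q n - d) / √(2 * (n + 2) / Real.pi) := by field_simp

theorem first_moment_bound_general (k : ℕ) (hk : 1 ≤ k) (c : ℝ)
    (hc : c < (1 / ((k : ℝ) + 1)) * Real.sqrt (Real.pi / 2) *
        (k.factorial : ℝ) ^ ((1 : ℝ) / k)) :
    ∃ N : ℕ, ∀ n : ℕ, N ≤ n → ∀ M : ℕ, ∀ a : Fin n → Fin k → ℤ,
      (∀ i j, |a i j| ≤ (M : ℤ)) →
      (Function.Injective fun A : Finset (Fin n) ↦ ∑ i ∈ A, a i) →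
      c * (2 : ℝ) ^ ((n : ℝ) / k) / Real.sqrt n ≤ (M : ℝ) := by
  have hk' : (0 : ℝ) < k := by exact_mod_cast hk
  have : NeZero k := ⟨by omega⟩
  set f : ℝ := (k.factorial : ℝ) ^ ((1 : ℝ) / k) with hf
  have hq : Tendsto (fun n : ℕ ↦ (2 : ℝ) ^ ((n : ℝ) / k)) atTop atTop :=
    (tendsto_rpow_atTop_of_base_gt_one 2 one_lt_two).comp
      (tendsto_natCast_atTop_atTop.atTop_div_const hk')
  have hc' : c < f / (k + 1) * √(Real.pi / 2) := by convert hc using 1; ring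
  obtain ⟨N, hN⟩ := eventually_atTop.1 (eventually_mul_div_sqrt_le hc' hq ((k + 1) / k))
  refine ⟨N, fun n hn M a ha hinj ↦ (hN n hn).trans ?_⟩
  have hT_pow : (f * 2 ^ ((n : ℝ) / k)) ^ k = k.factorial * 2 ^ n := by
    rw [mul_pow, hf, ← Real.rpow_mul_natCast (by positivity), ← Real.rpow_mul_natCast two_pos.le,
      div_mul_cancel₀ _ hk'.ne', div_mul_cancel₀ _ hk'.ne', Real.rpow_one, Real.rpow_natCast]
  have hbound := div_sub_le_mul_sqrt_of_injective_sum ha hinj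
    (T := f * 2 ^ ((n : ℝ) / k)) (by positivity) (by simpa using hT_pow)
  simp only [Fintype.card_fin] at hbound
  rwa [div_le_iff₀ (by positivity), div_mul_eq_mul_div]

/-- First moment bound: for any `c < (1/(k + 1)) · √(π/2) · (k!)^{1/k}`, for all large `n`,
any `M`-bounded distinct subset sum sequence `(a_1, …, a_n)` in `ℤ^k` satisfies
`M ≥ c · 2^{n/k} / √n`. -/
theorem first_moment_bound (k : ℕ) (hk : 1 ≤ k) (c : ℝ)
    (hc : c < (1 / ((k : ℝ) + 1)) * Real.sqrt (Real.pi / 2) *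
        (k.factorial : ℝ) ^ ((1 : ℝ) / k)) :
    ∃ N : ℕ, ∀ n : ℕ, N ≤ n → ∀ M : ℕ, ∀ a : Fin n → Fin k → ℤ,
      (∀ i j, 0 ≤ a i j ∧ a i j ≤ (M : ℤ)) →
      (∀ A B : Finset (Fin n), A ≠ B → ∑ i ∈ A, a i ≠ ∑ i ∈ B, a i) →
      c * (2 : ℝ) ^ ((n : ℝ) / k) / Real.sqrt n ≤ (M : ℝ) := by
  obtain ⟨N, hN⟩ := first_moment_bound_general k hk c hc
  exact ⟨N, fun n hn M a ha hd ↦ hN n hn M a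
    (fun i j ↦ (abs_of_nonneg (ha i j).1).trans_le (ha i j).2) fun A B ↦ not_imp_not.1 (hd A B)⟩
end

section
/- Fix an integer k ≥ 1 (third moment bound). For every real c < (k + 3)^{−1/3} · (π/8)^{1/6} · Γ((k + 3)/3)^{1/k} / Γ(4/3) there exists N such that for all integers n ≥ N the following holds: if M ≥ 0 is an integer and (a_1, …, a_n) is an M-bounded distinct subset sum sequence in ℤ^k, then M ≥ c · 2^{n/k} / √n. (Equivalently, M ≥ (1 + o(1)) · (k+3)^{−1/3} · (π/8)^{1/6} · (2^{n/k}/√n) · Γ((k+3)/3)^{1/k}/Γ(4/3) as n → ∞, where Γ is the Gamma function.) -/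
/-! Centre the `2 ^ n` subset sums at `½ ∑ i, a i` and integrate `∑ j, |y j| ^ 3` over the unit
cubes around them. Separated sums have disjoint cubes, so the integral is at least that over the
`ℓ³` ball of volume `2 ^ n`, the set of this volume minimizing it. On the other hand each coordinate
of a point of a random cube is a random sign combination of numbers of modulus at most `M / 2`, plus
a shift of modulus at most `M / 2`; by convexity its third absolute moment is at most that of
`M / 2` times a simple random walk of even length `n + 1` or `n + 2`, which is a multiple of a
central binomial coefficient and is estimated by the Wallis product. Comparing the two bounds gives
`K * 2 ^ (n / k) ≤ M * √(n + 2)` for every `n ≥ 1`, with the constant `K` of the theorem. -/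

open MeasureTheory Filter Finset
open scoped Topology

lemma centralBinom_mul_sqrt_le (m : ℕ) : (m.centralBinom : ℝ) * √(Real.pi * m) ≤ 4 ^ m := by
  have wallis := Real.Wallis.le_W m
  have factorial_eq : ((2 * m).factorial : ℝ) = m.centralBinom * (m.factorial : ℝ) ^ 2 := by
    have h := Nat.choose_mul_factorial_mul_factorial (show m ≤ 2 * m by lia)
    rw [show 2 * m - m = m by lia, ← Nat.centralBinom_eq_two_mul_choose] at h
    rw [← h]
    push_cast
    ring
  have hW : Real.Wallis.W m = (4 ^ m) ^ 2 / ((m.centralBinom : ℝ) ^ 2 * (2 * m + 1)) := by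
    have four_pow : (2 : ℝ) ^ (4 * m) = (4 ^ m) ^ 2 := by
      rw [← pow_mul, mul_comm m 2, pow_mul, pow_mul]
      norm_num
    have := m.factorial_pos
    rw [Real.Wallis.W_eq_factorial_ratio, factorial_eq, four_pow]
    field_simp
  have hC : (0 : ℝ) < m.centralBinom := mod_cast m.centralBinom_pos
  rw [hW, div_mul_eq_mul_div, div_le_div_iff₀ (by positivity) (by positivity)] at wallis
  refine (sq_le_sq₀ (by positivity) (by positivity)).mp ?_
  rw [mul_pow, Real.sq_sqrt (by positivity)]
  refine le_of_mul_le_mul_right ?_ (show (0 : ℝ) < 4 * m + 4 by positivity)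
  calc (m.centralBinom : ℝ) ^ 2 * (Real.pi * m) * (4 * m + 4)
      = m.centralBinom ^ 2 * Real.pi * ((2 * m + 1) ^ 2 - 1) := by ring
    _ ≤ m.centralBinom ^ 2 * Real.pi * (2 * m + 1) ^ 2 := by gcongr; linarith
    _ ≤ (4 ^ m) ^ 2 * (4 * m + 4) := by linarith

lemma sum_choose_mul_abs_sub_pow_three (m : ℕ) :
    ∑ j ∈ range (2 * m + 1), ((2 * m).choose j : ℝ) * |(j : ℝ) - m| ^ 3 =
      m ^ 2 * m.centralBinom := by
  -- Gosper summation gives this discrete antiderivative of the summand `2 C(2m, j) (j - m)³`.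
  let F : ℕ → ℝ := fun j ↦ -(j * (2 * m).choose j * ((j - m) * (j - m - 1) + m))
  have F_succ_sub (j : ℕ) : F (j + 1) - F j = 2 * ((2 * m).choose j * ((j : ℝ) - m) ^ 3) := by
    have succ_mul_choose : ((2 * m).choose (j + 1) : ℝ) * (j + 1) =
        (2 * m).choose j * (2 * m - j) := by
      rcases le_or_gt j (2 * m) with hj | hj
      · simpa [Nat.cast_sub hj] using
          congrArg (Nat.cast : ℕ → ℝ) (Nat.choose_succ_right_eq (2 * m) j)
      · simp [Nat.choose_eq_zero_of_lt hj, Nat.choose_eq_zero_of_lt (hj.trans j.lt_succ_self)]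
    simp only [F]
    push_cast
    linear_combination -(((j : ℝ) + 1 - m) * (j - m) + m) * succ_mul_choose
  have F_zero : F 0 = 0 := by simp [F]
  have F_mid : F m = -(m ^ 2 * m.centralBinom) := by
    simp only [F, Nat.centralBinom_eq_two_mul_choose]
    ring
  have F_end : F (2 * m + 1) = 0 := by simp [F]
  have lower : 2 * ∑ j ∈ range m, ((2 * m).choose j : ℝ) * |(j : ℝ) - m| ^ 3 = F 0 - F m := by
    rw [← neg_sub, ← sum_range_sub, mul_sum, ← sum_neg_distrib]
    refine sum_congr rfl fun j hj ↦ ?_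
    have : (j : ℝ) ≤ m := mod_cast (mem_range.mp hj).le
    rw [F_succ_sub, abs_of_nonpos (by linarith)]
    ring
  have upper : 2 * ∑ j ∈ Ico m (2 * m + 1), ((2 * m).choose j : ℝ) * |(j : ℝ) - m| ^ 3 =
      F (2 * m + 1) - F m := by
    rw [← sum_Ico_sub F (by lia : m ≤ 2 * m + 1), mul_sum]
    refine sum_congr rfl fun j hj ↦ ?_
    have : (m : ℝ) ≤ j := mod_cast (mem_Ico.mp hj).1
    rw [F_succ_sub, abs_of_nonneg (by linarith)]
  rw [← sum_range_add_sum_Ico _ (by lia : m ≤ 2 * m + 1)]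
  linarith

lemma convexOn_apply_add_add_apply_sub {φ : ℝ → ℝ} (hφ : ConvexOn ℝ Set.univ φ) (x : ℝ) :
    ConvexOn ℝ Set.univ fun h ↦ φ (x + h) + φ (x - h) := by
  have hadd : ConvexOn ℝ Set.univ fun h ↦ φ (x + h) := by
    simpa [Function.comp_def] using hφ.translate_right x
  exact hadd.add (by simpa [Function.comp_def, ← sub_eq_add_neg] using
    hadd.comp_linearMap (-LinearMap.id))

lemma apply_add_add_apply_sub_le {φ : ℝ → ℝ} (hφ : ConvexOn ℝ Set.univ φ) {h r : ℝ}
    (hr : |h| ≤ |r|) (x : ℝ) : φ (x + h) + φ (x - h) ≤ φ (x + r) + φ (x - r) := by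
  let g : ℝ → ℝ := fun y ↦ φ (x + y) + φ (x - y)
  have g_neg (y : ℝ) : g (-y) = g y := by simp only [g, sub_neg_eq_add, ← sub_eq_add_neg, add_comm]
  have g_abs : g |r| = g r := by rcases abs_choice r with hr | hr <;> simp only [hr, g_neg]
  have h_le : g h ≤ max (g (-|r|)) (g |r|) :=
    (convexOn_apply_add_add_apply_sub hφ x).le_max_of_mem_Icc (Set.mem_univ _) (Set.mem_univ _)
      (abs_le.mp hr)
  rwa [g_neg, max_self, g_abs] at h_le

/-- The expectation of `φ (x + ∑ i ∈ s, ε i * b i)` over independent uniform signs `ε i = ±1`.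
The set `A` records where `ε i = 1`, so that the random sum is `2 * ∑ i ∈ A, b i - ∑ i ∈ s, b i`. -/
noncomputable def signMean {κ : Type*} (φ : ℝ → ℝ) (b : κ → ℝ) (s : Finset κ) (x : ℝ) : ℝ :=
  (∑ A ∈ s.powerset, φ (x + (2 * ∑ i ∈ A, b i - ∑ i ∈ s, b i))) / 2 ^ #s

section SignMean

variable {κ : Type*} {φ : ℝ → ℝ} {b : κ → ℝ} {s : Finset κ} {M u x : ℝ}

@[simp]
lemma signMean_empty : signMean φ b ∅ x = φ x := by simp [signMean]

lemma signMean_insert [DecidableEq κ] {i : κ} (hi : i ∉ s) :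
    signMean φ b (insert i s) x = (signMean φ b s (x + b i) + signMean φ b s (x - b i)) / 2 := by
  have sum_without : ∑ A ∈ s.powerset, φ (x + (2 * ∑ j ∈ A, b j - ∑ j ∈ insert i s, b j)) =
      ∑ A ∈ s.powerset, φ (x - b i + (2 * ∑ j ∈ A, b j - ∑ j ∈ s, b j)) := by
    refine sum_congr rfl fun A _ ↦ congrArg φ ?_
    rw [sum_insert hi]
    ring
  have sum_with : ∑ A ∈ s.powerset,
        φ (x + (2 * ∑ j ∈ insert i A, b j - ∑ j ∈ insert i s, b j)) =
      ∑ A ∈ s.powerset, φ (x + b i + (2 * ∑ j ∈ A, b j - ∑ j ∈ s, b j)) := by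
    refine sum_congr rfl fun A hA ↦ congrArg φ ?_
    rw [sum_insert hi, sum_insert fun h ↦ hi (mem_powerset.mp hA h)]
    ring
  rw [signMean, sum_powerset_insert hi, card_insert_of_notMem hi, sum_without, sum_with,
    signMean, signMean]
  field_simp
  ring

lemma signMean_const (φ : ℝ → ℝ) (M : ℝ) (s : Finset κ) (x : ℝ) :
    signMean φ (fun _ ↦ M) s x =
      (∑ j ∈ range (#s + 1), ((#s).choose j : ℝ) * φ (x + M * (2 * j - #s))) / 2 ^ #s := by
  have h := sum_powerset_apply_card (fun j : ℕ ↦ φ (x + M * (2 * j - #s))) (x := s)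
  simp only [nsmul_eq_mul] at h
  rw [← h, signMean]
  simp only [sum_const, nsmul_eq_mul]
  congr! 4
  ring

lemma signMean_neg (hφ : Function.Even φ) (x : ℝ) :
    signMean φ b s (-x) = signMean φ b s x := by
  classical
  induction s using Finset.induction_on generalizing x with
  | empty => simpa using hφ x
  | insert i s hi ih =>
    rw [signMean_insert hi, signMean_insert hi, ← ih (x + b i), ← ih (x - b i), add_comm]
    ring_nf

lemma convexOn_signMean (hφ : ConvexOn ℝ Set.univ φ) (b : κ → ℝ) (s : Finset κ) :
    ConvexOn ℝ Set.univ (signMean φ b s) := by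
  have hsum : ConvexOn ℝ Set.univ
      (∑ A ∈ s.powerset, fun x ↦ φ (x + (2 * ∑ i ∈ A, b i - ∑ i ∈ s, b i))) := by
    refine sum_induction _ (ConvexOn ℝ Set.univ) (fun _ _ ↦ ConvexOn.add)
      (convexOn_const 0 convex_univ) fun A _ ↦ ?_
    simpa [Function.comp_def] using hφ.translate_left (2 * ∑ i ∈ A, b i - ∑ i ∈ s, b i)
  have signMean_eq : signMean φ b s = fun x ↦ (2 ^ #s : ℝ)⁻¹ •
      (∑ A ∈ s.powerset, fun x ↦ φ (x + (2 * ∑ i ∈ A, b i - ∑ i ∈ s, b i))) x := by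
    ext x
    simp [signMean, div_eq_inv_mul]
  rw [signMean_eq]
  exact hsum.smul (by positivity)

lemma monotone_signMean (hφ : ConvexOn ℝ Set.univ φ) (b : κ → ℝ) (x : ℝ) :
    Monotone fun s ↦ signMean φ b s x := by
  classical
  refine Finset.monotone_iff_forall_le_insert.mpr fun s i hi ↦ ?_
  have h := apply_add_add_apply_sub_le (convexOn_signMean hφ b s) (h := 0) (r := b i) (by simp) x
  simp only [add_zero, sub_zero] at h
  simp only [signMean_insert hi]
  linarith

lemma signMean_le_signMean_const (hφ : ConvexOn ℝ Set.univ φ) (hb : ∀ i ∈ s, |b i| ≤ M) (x : ℝ) :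
    signMean φ b s x ≤ signMean φ (fun _ ↦ M) s x := by
  classical
  induction s using Finset.induction_on generalizing x with
  | empty => simp
  | insert i s hi ih =>
    have ih' := ih fun j hj ↦ hb j (mem_insert_of_mem hj)
    rw [signMean_insert hi, signMean_insert hi]
    have := apply_add_add_apply_sub_le (convexOn_signMean hφ (fun _ ↦ M) s)
      ((hb i (mem_insert_self i s)).trans (le_abs_self M)) x
    linarith [ih' (x + b i), ih' (x - b i)]

lemma signMean_const_le_range_succ (hφ : ConvexOn ℝ Set.univ φ) (heven : Function.Even φ)
    (hu : |u| ≤ M) (n : ℕ) :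
    signMean φ (fun _ ↦ M) (range n) u ≤ signMean φ (fun _ ↦ M) (range (n + 1)) 0 := by
  have h := apply_add_add_apply_sub_le (convexOn_signMean hφ (fun _ ↦ M) (range n))
    (hu.trans (le_abs_self M)) 0
  rw [range_add_one, signMean_insert notMem_range_self]
  simp only [zero_add, zero_sub, signMean_neg heven] at h ⊢
  linarith

end SignMean

lemma signMean_abs_pow_three_range_two_mul {M : ℝ} (hM : 0 ≤ M) (m : ℕ) :
    signMean (fun y ↦ |y| ^ 3) (fun _ ↦ M) (range (2 * m)) 0 =
      8 * M ^ 3 * m ^ 2 * m.centralBinom / 4 ^ m := by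
  have four_pow : (2 : ℝ) ^ (2 * m) = 4 ^ m := by rw [pow_mul]; norm_num
  have summand (j : ℕ) : |0 + M * (2 * (j : ℝ) - (2 * m : ℕ))| ^ 3 =
      8 * M ^ 3 * |(j : ℝ) - m| ^ 3 := by
    rw [show 0 + M * (2 * (j : ℝ) - (2 * m : ℕ)) = 2 * M * (j - m) by push_cast; ring, abs_mul,
      abs_of_nonneg (by positivity : 0 ≤ 2 * M)]
    ring
  rw [signMean_const, card_range, four_pow]
  simp only [summand, mul_left_comm _ (8 * M ^ 3)]
  rw [← mul_sum, sum_choose_mul_abs_sub_pow_three, mul_assoc (8 * M ^ 3)]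

lemma signMean_abs_pow_three_range_two_mul_le {M : ℝ} (hM : 0 ≤ M) (m : ℕ) :
    signMean (fun y ↦ |y| ^ 3) (fun _ ↦ M) (range (2 * m)) 0 ≤
      (M * √(4 * m)) ^ 3 / √Real.pi := by
  have hC := centralBinom_mul_sqrt_le m
  have sqrt_four : √(4 * m : ℝ) = 2 * √m := by
    rw [Real.sqrt_mul (by norm_num), show (4 : ℝ) = 2 ^ 2 by norm_num, Real.sqrt_sq (by norm_num)]
  rw [Real.sqrt_mul Real.pi_pos.le] at hC
  rw [signMean_abs_pow_three_range_two_mul hM, sqrt_four,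
    div_le_div_iff₀ (by positivity) (Real.sqrt_pos.mpr Real.pi_pos)]
  calc 8 * M ^ 3 * m ^ 2 * m.centralBinom * √Real.pi
      = 8 * M ^ 3 * √m ^ 3 * (m.centralBinom * (√Real.pi * √m)) := by
        nth_rw 1 [← Real.sq_sqrt (Nat.cast_nonneg (α := ℝ) m)]
        ring
    _ ≤ 8 * M ^ 3 * √m ^ 3 * 4 ^ m := by gcongr
    _ = (M * (2 * √m)) ^ 3 * 4 ^ m := by ring

lemma signMean_abs_pow_three_le {κ : Type*} {b : κ → ℝ} {s : Finset κ} {M u : ℝ}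
    (hb : ∀ i ∈ s, |b i| ≤ M) (hu : |u| ≤ M) :
    signMean (fun y ↦ |y| ^ 3) b s u ≤ (M * √(2 * (#s + 2))) ^ 3 / √Real.pi := by
  have hM : 0 ≤ M := (abs_nonneg u).trans hu
  have hφ : ConvexOn ℝ Set.univ fun y : ℝ ↦ |y| ^ 3 :=
    ConvexOn.pow (convexOn_norm convex_univ) (fun y _ ↦ abs_nonneg y) 3
  have heven : Function.Even fun y : ℝ ↦ |y| ^ 3 := fun y ↦ by simp only [abs_neg]
  let m := #s / 2 + 1
  calc signMean (fun y ↦ |y| ^ 3) b s u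
      ≤ signMean (fun y ↦ |y| ^ 3) (fun _ ↦ M) s u := signMean_le_signMean_const hφ hb u
    _ = signMean (fun y ↦ |y| ^ 3) (fun _ ↦ M) (range #s) u := by
        simp only [signMean_const, card_range]
    _ ≤ signMean (fun y ↦ |y| ^ 3) (fun _ ↦ M) (range (#s + 1)) 0 :=
        signMean_const_le_range_succ hφ heven hu #s
    _ ≤ signMean (fun y ↦ |y| ^ 3) (fun _ ↦ M) (range (2 * m)) 0 :=
        monotone_signMean hφ _ _ (range_mono (by lia))
    _ ≤ (M * √(4 * m)) ^ 3 / √Real.pi := signMean_abs_pow_three_range_two_mul_le hM m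
    _ ≤ (M * √(2 * (#s + 2))) ^ 3 / √Real.pi := by
        have : (4 * m : ℝ) ≤ 2 * (#s + 2) := mod_cast (by lia : 4 * m ≤ 2 * (#s + 2))
        gcongr

lemma lintegral_measure_tsub_measure_le {α : Type*} [MeasurableSpace α] (μ : Measure α)
    {f : α → ℝ} (hf : Measurable f) (hf_nonneg : 0 ≤ f) (U : Set α) :
    ∫⁻ t in Set.Ioi 0, (μ U - μ {x | f x ≤ t}) ≤ ∫⁻ x in U, ENNReal.ofReal (f x) ∂μ := by
  rw [lintegral_eq_lintegral_meas_lt _ (Eventually.of_forall hf_nonneg) hf.aemeasurable]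
  refine lintegral_mono fun t ↦ ?_
  rw [Measure.restrict_apply (measurableSet_lt measurable_const hf), tsub_le_iff_right]
  refine (measure_mono fun x hx ↦ ?_).trans (measure_union_le _ _)
  exact (lt_or_ge t (f x)).imp (fun h ↦ ⟨h, hx⟩) id

lemma integral_rpow_sub_rpow {q s : ℝ} (hq : 0 ≤ q) (hs : 0 ≤ s) :
    ∫ t in (0 : ℝ)..s, (s ^ q - t ^ q) = s ^ q * s * (q / (q + 1)) := by
  have hint : IntervalIntegrable (fun t : ℝ ↦ t ^ q) volume 0 s :=
    (Real.continuous_rpow_const hq).intervalIntegrable 0 s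
  rw [intervalIntegral.integral_sub intervalIntegrable_const hint,
    intervalIntegral.integral_const, integral_rpow (Or.inl (by linarith)),
    Real.zero_rpow (by positivity), Real.rpow_add_one' hs (by positivity), smul_eq_mul]
  field_simp
  ring

/-- The volume of the unit ball of the `ℓ^p` norm in dimension `k`. -/
noncomputable def lpUnitBallVolume (p : ℝ) (k : ℕ) : ℝ :=
  (2 * Real.Gamma (1 / p + 1)) ^ k / Real.Gamma (k / p + 1)

lemma lpUnitBallVolume_pos {p : ℝ} (hp : 0 ≤ p) (k : ℕ) : 0 < lpUnitBallVolume p k := by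
  have := Real.Gamma_pos_of_pos (by positivity : 0 < 1 / p + 1)
  have := Real.Gamma_pos_of_pos (by positivity : 0 < k / p + 1)
  unfold lpUnitBallVolume
  positivity

section Separated

variable {ι : Type*} [Fintype ι] {p s : ℝ}

lemma volume_sum_abs_rpow_le [Nonempty ι] (hp : 1 ≤ p) (hs : 0 ≤ s) :
    volume {x : ι → ℝ | ∑ j, |x j| ^ p ≤ s} =
      ENNReal.ofReal (lpUnitBallVolume p (Fintype.card ι) * s ^ (Fintype.card ι / p)) := by
  have radius_eq : {x : ι → ℝ | ∑ j, |x j| ^ p ≤ s} =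
      {x | (∑ j, |x j| ^ p) ^ (1 / p) ≤ s ^ (1 / p)} := by
    ext x
    exact (Real.rpow_le_rpow_iff (by positivity) hs (one_div_pos.mpr (one_pos.trans_le hp))).symm
  rw [radius_eq, volume_sum_rpow_le ι hp, ← ENNReal.ofReal_pow (by positivity),
    ← ENNReal.ofReal_mul (by positivity), ← Real.rpow_mul_natCast hs, one_div_mul_eq_div, mul_comm,
    lpUnitBallVolume]

-- Among the sets of volume `T`, the `ℓ^p` ball minimizes the `p`-th moment, and `s` is the `p`-th
-- power of its radius.
lemma ofReal_le_setLIntegral_sum_abs_rpow [Nonempty ι] (hp : 1 ≤ p) (hs : 0 ≤ s)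
    {U : Set (ι → ℝ)} {T : ℝ}
    (hT : lpUnitBallVolume p (Fintype.card ι) * s ^ (Fintype.card ι / p) = T)
    (hU : volume U = ENNReal.ofReal T) :
    ENNReal.ofReal (T * s * (Fintype.card ι / (Fintype.card ι + p))) ≤
      ∫⁻ y in U, ENNReal.ofReal (∑ j, |y j| ^ p) := by
  have hp0 : 0 < p := one_pos.trans_le hp
  set V := lpUnitBallVolume p (Fintype.card ι)
  set q : ℝ := Fintype.card ι / p with hq_def
  have hV : 0 < V := lpUnitBallVolume_pos hp0.le _
  have hq : 0 ≤ q := by positivity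
  have hcont : Continuous fun t : ℝ ↦ V * (s ^ q - t ^ q) :=
    (continuous_const.sub (Real.continuous_rpow_const hq)).const_mul V
  calc ENNReal.ofReal (T * s * (Fintype.card ι / (Fintype.card ι + p)))
      = ENNReal.ofReal (∫ t in Set.Ioc 0 s, V * (s ^ q - t ^ q)) := by
        rw [← intervalIntegral.integral_of_le hs, intervalIntegral.integral_const_mul,
          integral_rpow_sub_rpow hq hs, ← hT, hq_def]
        congr 1
        field_simp
    _ = ∫⁻ t in Set.Ioc 0 s, ENNReal.ofReal (V * (s ^ q - t ^ q)) := by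
        refine ofReal_integral_eq_lintegral_ofReal
          (hcont.integrableOn_Icc.mono_set Set.Ioc_subset_Icc_self) ?_
        filter_upwards [ae_restrict_mem measurableSet_Ioc] with t ht
        exact mul_nonneg hV.le (sub_nonneg.mpr (Real.rpow_le_rpow ht.1.le ht.2 hq))
    _ = ∫⁻ t in Set.Ioc 0 s, (volume U - volume {x : ι → ℝ | ∑ j, |x j| ^ p ≤ t}) := by
        refine setLIntegral_congr_fun measurableSet_Ioc fun t ht ↦ ?_
        have := Real.rpow_nonneg ht.1.le q
        simp only [hU, ← hT, volume_sum_abs_rpow_le hp ht.1.le]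
        rw [← ENNReal.ofReal_sub _ (by positivity), mul_sub]
    _ ≤ ∫⁻ t in Set.Ioi 0, (volume U - volume {x : ι → ℝ | ∑ j, |x j| ^ p ≤ t}) :=
        lintegral_mono_set Set.Ioc_subset_Ioi_self
    _ ≤ ∫⁻ y in U, ENNReal.ofReal (∑ j, |y j| ^ p) :=
        lintegral_measure_tsub_measure_le volume (by fun_prop) (fun y ↦ by positivity) U

lemma setLIntegral_ball_eq_setLIntegral_ball_zero {E : Type*} [SeminormedAddCommGroup E]
    [MeasurableSpace E] [BorelSpace E] (μ : Measure E) [μ.IsAddLeftInvariant] (f : E → ENNReal)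
    (x : E) (r : ℝ) :
    ∫⁻ y in Metric.ball x r, f y ∂μ = ∫⁻ t in Metric.ball 0 r, f (x + t) ∂μ := by
  rw [← (measurePreserving_add_left μ x).setLIntegral_comp_preimage_emb
    (measurableEmbedding_addLeft x), preimage_add_ball, sub_self]

variable {α : Type*}

lemma pairwise_disjoint_ball_of_one_le_dist {E : Type*} [PseudoMetricSpace E] {X : α → E}
    (hX : Pairwise fun A B ↦ 1 ≤ dist (X A) (X B)) :
    Pairwise (Function.onFun Disjoint fun A ↦ Metric.ball (X A) (1 / 2)) :=
  hX.mono fun A B h ↦ Metric.ball_disjoint_ball (by linarith)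

variable [Fintype α]

lemma volume_iUnion_ball_of_one_le_dist {X : α → ι → ℝ}
    (hX : Pairwise fun A B ↦ 1 ≤ dist (X A) (X B)) :
    volume (⋃ A, Metric.ball (X A) (1 / 2)) = ENNReal.ofReal (Fintype.card α) := by
  rw [measure_iUnion (pairwise_disjoint_ball_of_one_le_dist hX)
    fun A ↦ measurableSet_ball, tsum_fintype]
  simp [Real.volume_pi_ball]

lemma card_mul_le_of_one_le_dist [Nonempty ι] (hp : 1 ≤ p) (hs : 0 ≤ s) {X : α → ι → ℝ}
    (hX : Pairwise fun A B ↦ 1 ≤ dist (X A) (X B))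
    (hcard : lpUnitBallVolume p (Fintype.card ι) * s ^ (Fintype.card ι / p) = Fintype.card α)
    {C : ℝ} (hC : ∀ t ∈ Metric.ball (0 : ι → ℝ) (1 / 2), ∑ A, ∑ j, |X A j + t j| ^ p ≤ C) :
    Fintype.card α * s * (Fintype.card ι / (Fintype.card ι + p)) ≤ C := by
  have hC0 : 0 ≤ C := le_trans (by positivity) (hC 0 (Metric.mem_ball_self (by norm_num)))
  refine (ENNReal.ofReal_le_ofReal_iff hC0).mp ?_
  calc ENNReal.ofReal (Fintype.card α * s * (Fintype.card ι / (Fintype.card ι + p)))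
      ≤ ∫⁻ y in ⋃ A, Metric.ball (X A) (1 / 2), ENNReal.ofReal (∑ j, |y j| ^ p) :=
        ofReal_le_setLIntegral_sum_abs_rpow hp hs hcard (volume_iUnion_ball_of_one_le_dist hX)
    _ = ∑ A, ∫⁻ t in Metric.ball (0 : ι → ℝ) (1 / 2), ENNReal.ofReal (∑ j, |X A j + t j| ^ p) := by
        rw [lintegral_iUnion (fun A ↦ measurableSet_ball)
          (pairwise_disjoint_ball_of_one_le_dist hX), tsum_fintype]
        exact sum_congr rfl fun A _ ↦ setLIntegral_ball_eq_setLIntegral_ball_zero volume _ (X A) _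
    _ = ∫⁻ t in Metric.ball (0 : ι → ℝ) (1 / 2), ENNReal.ofReal (∑ A, ∑ j, |X A j + t j| ^ p) := by
        rw [← lintegral_finsetSum _ fun A _ ↦ by fun_prop]
        refine lintegral_congr fun _ ↦ ?_
        rw [ENNReal.ofReal_sum_of_nonneg fun A _ ↦ by positivity]
    _ ≤ ∫⁻ _ in Metric.ball (0 : ι → ℝ) (1 / 2), ENNReal.ofReal C :=
        setLIntegral_mono' measurableSet_ball fun t ht ↦ ENNReal.ofReal_le_ofReal (hC t ht)
    _ = ENNReal.ofReal C := by simp [Real.volume_pi_ball]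

end Separated

section SubsetSums

variable {κ ι : Type*}

lemma one_le_of_one_le_dist_subsetSum [Nonempty κ] [Fintype ι] [Nonempty ι] {M : ℝ} {a : κ → ι → ℝ}
    (ha : ∀ i j, |a i j| ≤ M)
    (hsep : Pairwise fun A B : Finset κ ↦ 1 ≤ dist (∑ i ∈ A, a i) (∑ i ∈ B, a i)) : 1 ≤ M := by
  let i : κ := Classical.arbitrary κ
  have hdist : 1 ≤ ‖a i‖ := by simpa using hsep (singleton_ne_empty i)
  exact hdist.trans ((pi_norm_le_iff_of_nonempty _).mpr (ha i))

variable [Fintype κ]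

lemma sum_abs_subsetSum_sub_add_pow_three_le {c : κ → ℝ} {M u : ℝ} (hc : ∀ i, |c i| ≤ M)
    (hu : |u| ≤ M / 2) :
    ∑ A : Finset κ, |∑ i ∈ A, c i - 2⁻¹ * ∑ i, c i + u| ^ 3 ≤
      2 ^ Fintype.card κ * ((M / 2 * √(2 * (Fintype.card κ + 2))) ^ 3 / √Real.pi) := by
  have hhalf (i : κ) : |c i / 2| ≤ M / 2 := by
    rw [abs_div, abs_two]
    gcongr
    exact hc i
  have hmean := signMean_abs_pow_three_le (s := univ) (fun i _ ↦ hhalf i) hu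
  rw [signMean, powerset_univ, card_univ, div_le_iff₀' (by positivity)] at hmean
  refine le_of_eq_of_le (sum_congr rfl fun A _ ↦ ?_) hmean
  rw [← sum_div, ← sum_div]
  ring_nf

variable [Fintype ι]

lemma mul_sqrt_pi_le_of_one_le_dist_subsetSum [Nonempty κ] [Nonempty ι] {M s : ℝ} {a : κ → ι → ℝ}
    (ha : ∀ i j, |a i j| ≤ M)
    (hsep : Pairwise fun A B : Finset κ ↦ 1 ≤ dist (∑ i ∈ A, a i) (∑ i ∈ B, a i)) (hs : 0 ≤ s)
    (hvol : lpUnitBallVolume 3 (Fintype.card ι) * s ^ ((Fintype.card ι : ℝ) / 3) =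
      2 ^ Fintype.card κ) :
    s * √Real.pi ≤ (Fintype.card ι + 3) * (M / 2 * √(2 * (Fintype.card κ + 2))) ^ 3 := by
  set n := Fintype.card κ
  set k := Fintype.card ι
  have hM := one_le_of_one_le_dist_subsetSum ha hsep
  let X (A : Finset κ) : ι → ℝ := ∑ i ∈ A, a i - (2⁻¹ : ℝ) • ∑ i, a i
  have hX : Pairwise fun A B ↦ 1 ≤ dist (X A) (X B) := fun A B hAB ↦ by
    simpa only [X, dist_sub_right] using hsep hAB
  have moment_le (t : ι → ℝ) (ht : t ∈ Metric.ball 0 (1 / 2)) :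
      ∑ A, ∑ j, |X A j + t j| ^ (3 : ℝ) ≤
        k * (2 ^ n * ((M / 2 * √(2 * (n + 2))) ^ 3 / √Real.pi)) := by
    have ht_le (j : ι) : |t j| ≤ M / 2 :=
      (norm_le_pi_norm t j).trans (by linarith [mem_ball_zero_iff.mp ht])
    rw [sum_comm, ← nsmul_eq_mul]
    refine sum_le_card_nsmul _ _ _ fun j _ ↦ ?_
    simpa [X] using sum_abs_subsetSum_sub_add_pow_three_le (fun i ↦ ha i j) (ht_le j)
  have hpack := card_mul_le_of_one_le_dist (p := 3) (by norm_num) hs hX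
    (by simpa [n, k] using hvol) moment_le
  have hk : (0 : ℝ) < k := mod_cast Fintype.card_pos
  rw [Fintype.card_finset, Nat.cast_pow, Nat.cast_ofNat] at hpack
  have hcancel : s / (k + 3) ≤ (M / 2 * √(2 * (n + 2))) ^ 3 / √Real.pi := by
    refine le_of_mul_le_mul_left ?_ (by positivity : (0 : ℝ) < 2 ^ n * k)
    calc 2 ^ n * k * (s / (k + 3)) = 2 ^ n * s * (k / (k + 3)) := by ring
      _ ≤ k * (2 ^ n * ((M / 2 * √(2 * (n + 2))) ^ 3 / √Real.pi)) := hpack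
      _ = 2 ^ n * k * ((M / 2 * √(2 * (n + 2))) ^ 3 / √Real.pi) := by ring
  rwa [div_le_div_iff₀ (by positivity) (Real.sqrt_pos.mpr Real.pi_pos), mul_comm _ ((k : ℝ) + 3)]
    at hcancel

/-- The constant `(k + 3)^{-1/3} (π/8)^{1/6} Γ((k + 3)/3)^{1/k} / Γ(4/3)` of the third moment
bound in dimension `k`. -/
noncomputable def thirdMomentConst (k : ℕ) : ℝ :=
  ((k : ℝ) + 3) ^ (-(1 : ℝ) / 3) * (Real.pi / 8) ^ ((1 : ℝ) / 6) *
    Real.Gamma (((k : ℝ) + 3) / 3) ^ ((1 : ℝ) / k) / Real.Gamma (4 / 3)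

lemma thirdMomentConst_mul_rpow {k : ℕ} (hk : k ≠ 0) {T : ℝ} (hT : 0 ≤ T) :
    thirdMomentConst k * T ^ (1 / k : ℝ) =
      ((k : ℝ) + 3) ^ (-(1 : ℝ) / 3) * (Real.pi / 8) ^ ((1 : ℝ) / 6) *
        (2 * (T / lpUnitBallVolume 3 k) ^ (1 / k : ℝ)) := by
  have hΓ := Real.Gamma_pos_of_pos (by positivity : 0 < ((k : ℝ) + 3) / 3)
  have := Real.Gamma_pos_of_pos (by norm_num : (0 : ℝ) < 4 / 3)
  have hroot : (T / lpUnitBallVolume 3 k) ^ (1 / k : ℝ) =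
      Real.Gamma ((k + 3) / 3) ^ (1 / k : ℝ) * T ^ (1 / k : ℝ) / (2 * Real.Gamma (4 / 3)) := by
    rw [lpUnitBallVolume, show (1 : ℝ) / 3 + 1 = 4 / 3 by norm_num,
      show (k : ℝ) / 3 + 1 = (k + 3) / 3 by ring, div_div_eq_mul_div, mul_comm T,
      Real.div_rpow (by positivity) (by positivity), Real.mul_rpow hΓ.le hT, one_div,
      Real.pow_rpow_inv_natCast (by positivity) hk]
  rw [hroot, thirdMomentConst]
  field_simp

lemma thirdMomentConst_mul_rpow_pow_three {k : ℕ} (hk : k ≠ 0) {T : ℝ} (hT : 0 ≤ T) :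
    (thirdMomentConst k * T ^ (1 / k : ℝ)) ^ 3 =
      √8 * √Real.pi * (T / lpUnitBallVolume 3 k) ^ (3 / k : ℝ) / (k + 3) := by
  have hV := lpUnitBallVolume_pos (by norm_num : (0 : ℝ) ≤ 3) k
  have cube_dim : (((k : ℝ) + 3) ^ (-(1 : ℝ) / 3)) ^ 3 = (k + 3 : ℝ)⁻¹ := by
    rw [← Real.rpow_mul_natCast (by positivity), ← Real.rpow_neg_one]
    norm_num
  have cube_pi : ((Real.pi / 8) ^ ((1 : ℝ) / 6)) ^ 3 = √Real.pi / √8 := by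
    rw [← Real.rpow_mul_natCast (by positivity), ← Real.sqrt_div Real.pi_pos.le,
      Real.sqrt_eq_rpow]
    norm_num
  have cube_root : ((T / lpUnitBallVolume 3 k) ^ (1 / k : ℝ)) ^ 3 =
      (T / lpUnitBallVolume 3 k) ^ (3 / k : ℝ) := by
    rw [← Real.rpow_mul_natCast (by positivity)]
    congr 1
    push_cast
    ring
  rw [thirdMomentConst_mul_rpow hk hT, mul_pow, mul_pow, mul_pow, cube_dim, cube_pi, cube_root]
  field_simp
  rw [Real.sq_sqrt (by norm_num)]
  ring

theorem thirdMomentConst_mul_rpow_le_of_one_le_dist_subsetSum [Nonempty κ] [Nonempty ι] {M : ℝ}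
    {a : κ → ι → ℝ} (ha : ∀ i j, |a i j| ≤ M)
    (hsep : Pairwise fun A B : Finset κ ↦ 1 ≤ dist (∑ i ∈ A, a i) (∑ i ∈ B, a i)) :
    thirdMomentConst (Fintype.card ι) * 2 ^ (Fintype.card κ / Fintype.card ι : ℝ) ≤
      M * √(Fintype.card κ + 2) := by
  set n := Fintype.card κ
  set k := Fintype.card ι
  have hk : k ≠ 0 := Fintype.card_ne_zero
  have hM := one_le_of_one_le_dist_subsetSum ha hsep
  have hV := lpUnitBallVolume_pos (by norm_num : (0 : ℝ) ≤ 3) k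
  set s : ℝ := (2 ^ n / lpUnitBallVolume 3 k) ^ (3 / k : ℝ)
  have hvol : lpUnitBallVolume 3 k * s ^ ((k : ℝ) / 3) = 2 ^ n := by
    rw [← Real.rpow_mul (by positivity), div_mul_div_cancel₀' (by norm_num),
      div_self (by positivity), Real.rpow_one, mul_div_cancel₀ _ hV.ne']
  have hs : s * √Real.pi ≤ (k + 3) * (M / 2 * √(2 * (n + 2))) ^ 3 :=
    mul_sqrt_pi_le_of_one_le_dist_subsetSum ha hsep (by positivity) hvol
  have two_rpow : (2 : ℝ) ^ (n / k : ℝ) = (2 ^ n) ^ (1 / k : ℝ) := by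
    rw [← Real.rpow_natCast_mul (by norm_num), mul_one_div]
  have sqrt_eq : √8 * (M / 2 * √(2 * (n + 2))) ^ 3 = (M * √(n + 2)) ^ 3 := by
    have sq_sqrt_two : √2 ^ 2 = (2 : ℝ) := Real.sq_sqrt (by norm_num)
    have sqrt_eight : √8 = 2 * √2 := by
      rw [show (8 : ℝ) = 2 ^ 2 * 2 by norm_num, Real.sqrt_mul (by norm_num),
        Real.sqrt_sq (by norm_num)]
    rw [sqrt_eight, Real.sqrt_mul (by norm_num)]
    linear_combination (M * √(n + 2)) ^ 3 / 4 * (√2 ^ 2 + 2) * sq_sqrt_two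
  rw [two_rpow]
  refine le_of_pow_le_pow_left₀ three_ne_zero (by positivity) ?_
  calc (thirdMomentConst k * (2 ^ n) ^ (1 / k : ℝ)) ^ 3
      = √8 * (s * √Real.pi) / (k + 3) := by
        rw [thirdMomentConst_mul_rpow_pow_three hk (by positivity)]
        ring
    _ ≤ √8 * ((k + 3) * (M / 2 * √(2 * (n + 2))) ^ 3) / (k + 3) := by gcongr
    _ = √8 * (M / 2 * √(2 * (n + 2))) ^ 3 := by field_simp
    _ = (M * √(n + 2)) ^ 3 := sqrt_eq

end SubsetSums

lemma eventually_mul_sqrt_natCast_add_le {c K : ℝ} (h : c < K) (d : ℝ) :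
    ∀ᶠ n : ℕ in atTop, c * √(n + d) ≤ K * √n := by
  have hlim : Tendsto (fun n : ℕ ↦ c * √(1 + d / n)) atTop (𝓝 c) := by
    simpa using (((tendsto_const_div_atTop_nhds_zero_nat d).const_add 1).sqrt).const_mul c
  filter_upwards [hlim.eventually_lt_const h, eventually_gt_atTop 0] with n hn hpos
  have hn0 : (0 : ℝ) < n := mod_cast hpos
  have hsplit : √(n + d) = √(1 + d / n) * √n := by
    rw [← Real.sqrt_mul' _ hn0.le, one_add_mul, div_mul_cancel₀ _ hn0.ne']
  rw [hsplit, ← mul_assoc]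
  gcongr

theorem third_moment_bound_general {ι : Type*} [Fintype ι] [Nonempty ι] (c : ℝ)
    (hc : c < thirdMomentConst (Fintype.card ι)) :
    ∃ N : ℕ, ∀ n : ℕ, N ≤ n → ∀ (M : ℝ) (a : Fin n → ι → ℝ),
      (∀ i j, |a i j| ≤ M) →
      (Pairwise fun A B : Finset (Fin n) ↦ 1 ≤ dist (∑ i ∈ A, a i) (∑ i ∈ B, a i)) →
      c * 2 ^ (n / Fintype.card ι : ℝ) / √n ≤ M := by
  set k := Fintype.card ι
  obtain ⟨N, hN⟩ := eventually_atTop.mp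
    ((eventually_mul_sqrt_natCast_add_le hc 2).and (eventually_gt_atTop 0))
  refine ⟨N, fun n hn M a ha hsep ↦ ?_⟩
  obtain ⟨hsqrt, hn0⟩ := hN n hn
  have : Nonempty (Fin n) := ⟨⟨0, hn0⟩⟩
  have hexplicit : thirdMomentConst k * 2 ^ (n / k : ℝ) ≤ M * √(n + 2) := by
    simpa using thirdMomentConst_mul_rpow_le_of_one_le_dist_subsetSum ha hsep
  rw [div_le_iff₀ (by positivity)]
  refine le_of_mul_le_mul_right ?_ (by positivity : 0 < √((n : ℝ) + 2))
  calc c * 2 ^ (n / k : ℝ) * √(n + 2) = c * √(n + 2) * 2 ^ (n / k : ℝ) := by ring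
    _ ≤ thirdMomentConst k * √n * 2 ^ (n / k : ℝ) := by gcongr
    _ = thirdMomentConst k * 2 ^ (n / k : ℝ) * √n := by ring
    _ ≤ M * √(n + 2) * √n := by gcongr
    _ = M * √n * √(n + 2) := by ring

lemma one_le_dist_intCast_of_ne {ι : Type*} [Fintype ι] {x y : ι → ℤ} (h : x ≠ y) :
    1 ≤ dist (fun j ↦ (x j : ℝ)) fun j ↦ (y j : ℝ) := by
  obtain ⟨j, hj⟩ := Function.ne_iff.mp h
  calc (1 : ℝ) ≤ dist (x j : ℝ) (y j) := by
        rw [Int.dist_cast_real]; exact Int.pairwise_one_le_dist hj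
    _ ≤ dist (fun j ↦ (x j : ℝ)) fun j ↦ (y j : ℝ) :=
      dist_le_pi_dist (fun j ↦ (x j : ℝ)) (fun j ↦ (y j : ℝ)) j

/-- Third moment bound: for any `c < (k + 3)^{−1/3} · (π/8)^{1/6} · Γ((k + 3)/3)^{1/k} / Γ(4/3)`,
for all large `n`, any `M`-bounded distinct subset sum sequence `(a_1, …, a_n)` in `ℤ^k`
satisfies `M ≥ c · 2^{n/k} / √n`. -/
theorem third_moment_bound (k : ℕ) (hk : 1 ≤ k) (c : ℝ)
    (hc : c < ((k : ℝ) + 3) ^ (-(1 : ℝ) / 3) * (Real.pi / 8) ^ ((1 : ℝ) / 6) *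
        Real.Gamma (((k : ℝ) + 3) / 3) ^ ((1 : ℝ) / k) / Real.Gamma (4 / 3)) :
    ∃ N : ℕ, ∀ n : ℕ, N ≤ n → ∀ M : ℕ, ∀ a : Fin n → Fin k → ℤ,
      (∀ i j, 0 ≤ a i j ∧ a i j ≤ (M : ℤ)) →
      (∀ A B : Finset (Fin n), A ≠ B → ∑ i ∈ A, a i ≠ ∑ i ∈ B, a i) →
      c * (2 : ℝ) ^ ((n : ℝ) / k) / Real.sqrt n ≤ (M : ℝ) := by
  have : Nonempty (Fin k) := ⟨⟨0, hk⟩⟩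
  obtain ⟨N, hN⟩ := third_moment_bound_general (ι := Fin k) c (by simpa [thirdMomentConst] using hc)
  refine ⟨N, fun n hn M a ha hd ↦ ?_⟩
  simpa using hN n hn M (fun i j ↦ a i j)
    (fun i j ↦ by exact_mod_cast abs_le.mpr ⟨by linarith [ha i j], (ha i j).2⟩)
    fun A B hAB ↦ by simpa [Finset.sum_fn] using one_le_dist_intCast_of_ne (hd A B hAB)
end

section
/- For every integer k ≥ 7, the variance coefficient dominates the other two: (1/√(k + 2)) · √(4/π) · Γ(k/2 + 1)^{1/k} ≥ (1/(k + 1)) · √(π/2) · (k!)^{1/k} and (1/√(k + 2)) · √(4/π) · Γ(k/2 + 1)^{1/k} ≥ (k + 3)^{−1/3} · (π/8)^{1/6} · Γ((k + 3)/3)^{1/k} / Γ(4/3), where Γ denotes the Gamma function. -/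
/-!
Write `log Γ(s) = (s - 1/2) log s - s + log (2π) / 2 + R(s)`. The logarithmic series gives
`1 / (3 (2s + 1)²) ≤ R(s) - R(s + 1) ≤ 1 / (12 s (s + 1))`, and since `R(s + n) → 0` these
telescope to `1 / (6 (2s + 1)) ≤ R(s) ≤ 1 / (12 s)`. When Stirling's formula is inserted in the
logarithms of the coefficients, all terms of the form `x log x` cancel: up to bounded quantities,
the difference of two logarithms, multiplied by `x`, is a linear function of `x`. Its slope is
`1/2 - log (π / 2) > 0` for the first moment and a sixth of
`6 log 2 + 2 log 3 + 6 log Γ(4/3) - 1 - 4 log π ≥ 0` for the third moment.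
-/

section

open Filter Real Topology

section Stirling

/-- The error term in Stirling's formula for `log Γ(s)` (Binet's function). -/
noncomputable def stirlingRemainder (s : ℝ) : ℝ :=
  log (Gamma s) - ((s - 1 / 2) * log s - s + log (2 * π) / 2)

lemma log_Gamma_eq_add_stirlingRemainder (s : ℝ) :
    log (Gamma s) = (s - 1 / 2) * log s - s + log (2 * π) / 2 + stirlingRemainder s := by
  rw [stirlingRemainder]; ring

lemma log_Gamma_add_one {s : ℝ} (hs : 0 < s) :
    log (Gamma (s + 1)) = log (Gamma s) + log s := by
  rw [Gamma_add_one hs.ne', log_mul hs.ne' (Gamma_pos_of_pos hs).ne', add_comm]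

lemma log_Gamma_add_natCast {s : ℝ} (hs : 0 < s) (n : ℕ) :
    log (Gamma (s + n)) = log (Gamma s) + ∑ m ∈ Finset.range n, log (s + m) :=
  BohrMollerup.f_add_nat_eq (f := fun t ↦ log (Gamma t)) log_Gamma_add_one hs n

lemma stirlingRemainder_sub_stirlingRemainder_add_one {s : ℝ} (hs : 0 < s) :
    stirlingRemainder s - stirlingRemainder (s + 1) = (s + 1 / 2) * log (1 + s⁻¹) - 1 := by
  have hlog : log (1 + s⁻¹) = log (s + 1) - log s := by
    rw [← log_div (by positivity) hs.ne', add_div, div_self hs.ne', one_div]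
  rw [stirlingRemainder, stirlingRemainder, log_Gamma_add_one hs, hlog]
  ring

lemma hasSum_add_half_mul_log_one_add_inv {s : ℝ} (hs : 0 < s) :
    HasSum (fun j : ℕ ↦ 1 / (2 * (j : ℝ) + 1) * ((1 / (2 * s + 1)) ^ 2) ^ j)
      ((s + 1 / 2) * log (1 + s⁻¹)) := by
  refine ((hasSum_log_one_add_inv hs).mul_left (s + 1 / 2)).congr_fun fun j ↦ ?_
  rw [← pow_mul, pow_succ _ (2 * j)]
  field_simp

lemma one_add_le_add_half_mul_log_one_add_inv {s : ℝ} (hs : 0 < s) :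
    1 + 1 / (3 * (2 * s + 1) ^ 2) ≤ (s + 1 / 2) * log (1 + s⁻¹) := by
  have h := sum_le_hasSum (Finset.range 2) (fun j _ ↦ by positivity)
    (hasSum_add_half_mul_log_one_add_inv hs)
  refine le_of_eq_of_le ?_ h
  rw [Finset.sum_range_succ, Finset.sum_range_one, Nat.cast_zero, Nat.cast_one]
  field_simp
  ring

lemma add_half_mul_log_one_add_inv_le {s : ℝ} (hs : 0 < s) :
    (s + 1 / 2) * log (1 + s⁻¹) ≤ 1 + 1 / (12 * s * (s + 1)) := by
  set q : ℝ := (1 / (2 * s + 1)) ^ 2 with hq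
  have hq_lt : q < 1 := by
    rw [hq, one_div, inv_pow]
    exact inv_lt_one_of_one_lt₀ (one_lt_pow₀ (by linarith) two_ne_zero)
  have hq_nonneg : 0 ≤ q := sq_nonneg _
  have hseries := (hasSum_nat_add_iff' 1).2 (hasSum_add_half_mul_log_one_add_inv hs)
  have hgeom : HasSum (fun j : ℕ ↦ 1 / 3 * q ^ (j + 1)) (1 / 3 * (q * (1 - q)⁻¹)) := by
    simpa only [pow_succ'] using
      ((hasSum_geometric_of_lt_one hq_nonneg hq_lt).mul_left q).mul_left (1 / 3)
  have hle := hasSum_le (fun j : ℕ ↦ mul_le_mul_of_nonneg_right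
    (one_div_le_one_div_of_le three_pos (by push_cast; linarith [j.cast_nonneg (α := ℝ)]))
    (by positivity)) hseries hgeom
  have hsum : 1 / 3 * (q * (1 - q)⁻¹) = 1 / (12 * s * (s + 1)) := by
    have : 1 - q = 4 * s * (s + 1) / (2 * s + 1) ^ 2 := by rw [hq]; field_simp; ring
    rw [this, hq]
    field_simp
    norm_num
  rw [hsum, Finset.sum_range_one, Nat.cast_zero, mul_zero, zero_add, pow_zero, div_one, one_mul]
    at hle
  linarith

lemma tendsto_add_mul_log_one_add_div (a t : ℝ) :
    Tendsto (fun x ↦ (x + a) * log (1 + t / x)) atTop (𝓝 t) := by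
  have hdiv : Tendsto (fun x : ℝ ↦ 1 + t / x) atTop (𝓝 1) := by
    simpa using (tendsto_id.const_div_atTop t).const_add 1
  have hlog : Tendsto (fun x ↦ a * log (1 + t / x)) atTop (𝓝 0) := by
    simpa using (hdiv.log one_ne_zero).const_mul a
  simpa [add_mul] using (tendsto_mul_log_one_add_div_atTop t).add hlog

lemma tendsto_log_stirlingSeq :
    Tendsto (fun n ↦ log (Stirling.stirlingSeq n)) atTop (𝓝 (log π / 2)) := by
  rw [← log_sqrt pi_pos.le]
  exact Stirling.tendsto_stirlingSeq_sqrt_pi.log (by positivity)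

lemma stirlingRemainder_add_natCast_add_one {s : ℝ} (hs : 0 < s) {n : ℕ} (hn : n ≠ 0) :
    stirlingRemainder (s + (n + 1 : ℕ)) =
      (log (Gamma s) - BohrMollerup.logGammaSeq s n)
        + (log (Stirling.stirlingSeq n) - log π / 2)
        + (s + 1 - (n + (s + 1 / 2)) * log (1 + (s + 1) / n)) := by
  have hn' : (0 : ℝ) < n := by positivity
  have hlog : log (1 + (s + 1) / n) = log (s + (n + 1 : ℕ)) - log n := by
    rw [← log_div (by positivity) hn'.ne']
    congr 1
    field_simp
    push_cast
    ring
  rw [stirlingRemainder, log_Gamma_add_natCast hs, BohrMollerup.logGammaSeq,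
    Stirling.log_stirlingSeq_formula, hlog, log_mul two_ne_zero pi_ne_zero,
    log_mul two_ne_zero hn'.ne', log_div hn'.ne' (exp_ne_zero 1), log_exp]
  push_cast
  ring

lemma tendsto_stirlingRemainder_add_natCast {s : ℝ} (hs : 0 < s) :
    Tendsto (fun n : ℕ ↦ stirlingRemainder (s + n)) atTop (𝓝 0) := by
  rw [← tendsto_add_atTop_iff_nat 1]
  have hGamma := (BohrMollerup.tendsto_log_gamma hs).const_sub (log (Gamma s))
  have hfactorial := tendsto_log_stirlingSeq.sub_const (log π / 2)
  have hlog := ((tendsto_add_mul_log_one_add_div (s + 1 / 2) (s + 1)).comp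
    tendsto_natCast_atTop_atTop).const_sub (s + 1)
  have hsum := (hGamma.add hfactorial).add hlog
  simp only [sub_self, add_zero] at hsum
  refine hsum.congr' ?_
  filter_upwards [eventually_ne_atTop 0] with n hn
  exact (stirlingRemainder_add_natCast_add_one hs hn).symm

lemma nonneg_of_forall_add_one_le {f : ℝ → ℝ} {s : ℝ} (hstep : ∀ t, s ≤ t → f (t + 1) ≤ f t)
    (hlim : Tendsto (fun n : ℕ ↦ f (s + n)) atTop (𝓝 0)) : 0 ≤ f s := by
  have hanti : Antitone fun n : ℕ ↦ f (s + n) := antitone_nat_of_succ_le fun n ↦ by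
    simpa only [Nat.cast_succ, add_assoc] using hstep (s + n) (by simp)
  simpa using hanti.le_of_tendsto hlim 0

lemma tendsto_one_div_mul_add_natCast_add {a : ℝ} (ha : 0 < a) (s b : ℝ) :
    Tendsto (fun n : ℕ ↦ 1 / (a * (s + n) + b)) atTop (𝓝 0) :=
  tendsto_const_nhds.div_atTop <| tendsto_atTop_add_const_right _ _ <|
    (tendsto_atTop_add_const_left _ s tendsto_natCast_atTop_atTop).const_mul_atTop ha

theorem one_div_le_stirlingRemainder {s : ℝ} (hs : 0 < s) :
    1 / (12 * s + 6) ≤ stirlingRemainder s := by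
  refine sub_nonneg.1 <| nonneg_of_forall_add_one_le
    (f := fun t ↦ stirlingRemainder t - 1 / (12 * t + 6)) (fun t ht ↦ ?_) ?_
  · have ht₀ : 0 < t := hs.trans_le ht
    have hdiff := stirlingRemainder_sub_stirlingRemainder_add_one ht₀
    have hlog := one_add_le_add_half_mul_log_one_add_inv ht₀
    have htelescope : 1 / (12 * t + 6) - 1 / (12 * (t + 1) + 6) ≤ 1 / (3 * (2 * t + 1) ^ 2) := by
      rw [div_sub_div _ _ (by positivity) (by positivity),
        div_le_div_iff₀ (by positivity) (by positivity)]
      nlinarith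
    linarith
  · simpa using (tendsto_stirlingRemainder_add_natCast hs).sub
      (tendsto_one_div_mul_add_natCast_add (a := 12) (by norm_num) s 6)

theorem stirlingRemainder_le_one_div {s : ℝ} (hs : 0 < s) :
    stirlingRemainder s ≤ 1 / (12 * s) := by
  refine sub_nonneg.1 <| nonneg_of_forall_add_one_le
    (f := fun t ↦ 1 / (12 * t) - stirlingRemainder t) (fun t ht ↦ ?_) ?_
  · have ht₀ : 0 < t := hs.trans_le ht
    have hdiff := stirlingRemainder_sub_stirlingRemainder_add_one ht₀
    have hlog := add_half_mul_log_one_add_inv_le ht₀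
    have htelescope : 1 / (12 * t) - 1 / (12 * (t + 1)) = 1 / (12 * t * (t + 1)) := by
      field_simp
      ring
    linarith
  · simpa using (tendsto_one_div_mul_add_natCast_add (a := 12) (by norm_num) s 0).sub
      (tendsto_stirlingRemainder_add_natCast hs)

lemma stirlingRemainder_pos {s : ℝ} (hs : 0 < s) : 0 < stirlingRemainder s :=
  lt_of_lt_of_le (by positivity) (one_div_le_stirlingRemainder hs)

end Stirling

section Constants

lemma log_pi_div_two_le : log (π / 2) ≤ 14 / 31 := by
  have hpow : (π / 2) ^ 31 ≤ exp 1 ^ 14 :=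
    calc (π / 2) ^ 31 ≤ (3.1416 / 2) ^ 31 := by gcongr; exact pi_lt_d4.le
      _ ≤ 2.7182818283 ^ 14 := by norm_num
      _ ≤ exp 1 ^ 14 := by gcongr; exact exp_one_gt_d9.le
  have hlog := log_le_log (by positivity) hpow
  rw [log_pow, log_pow, log_exp] at hlog
  push_cast at hlog
  linarith

lemma Gamma_nineteen_thirds : Gamma (19 / 3) = 58240 / 243 * Gamma (4 / 3) := by
  rw [show (19 / 3 : ℝ) = 4 / 3 + 1 + 1 + 1 + 1 + 1 by norm_num]
  iterate 5 rw [Gamma_add_one (by norm_num)]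
  ring

lemma thirty_nine_add_log_pi_add_log_le :
    39 + log π + 6 * log (58240 / 243) ≤ 9 * log 2 + 2 * log 3 + 35 * log (19 / 3) := by
  have hpow : exp 1 ^ 39 * π * (58240 / 243) ^ 6 ≤ 2 ^ 9 * 3 ^ 2 * (19 / 3) ^ 35 :=
    calc exp 1 ^ 39 * π * (58240 / 243) ^ 6
        ≤ 2.7182818286 ^ 39 * 3.1416 * (58240 / 243) ^ 6 := by
          gcongr
          · exact exp_one_lt_d9.le
          · exact pi_lt_d4.le
      _ ≤ 2 ^ 9 * 3 ^ 2 * (19 / 3) ^ 35 := by norm_num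
  have hlog := log_le_log (by positivity) hpow
  rw [log_mul (by positivity) (by positivity), log_mul (by positivity) (by positivity),
    log_mul (by positivity) (by positivity),
    log_mul (by positivity) (by positivity)] at hlog
  simp only [log_pow, log_exp] at hlog
  push_cast at hlog
  linarith

-- Stirling's lower bound for `Γ` is too weak at `4 / 3` itself but suffices at `4 / 3 + 5`.
lemma one_add_four_mul_log_pi_le :
    1 + 4 * log π ≤ 6 * log 2 + 2 * log 3 + 6 * log (Gamma (4 / 3)) := by
  have hΓ := Gamma_pos_of_pos (show (0 : ℝ) < 4 / 3 by norm_num)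
  have hstirling := log_Gamma_eq_add_stirlingRemainder (19 / 3)
  rw [Gamma_nineteen_thirds, log_mul (by norm_num) hΓ.ne',
    log_mul two_ne_zero pi_ne_zero] at hstirling
  have hpos := stirlingRemainder_pos (show (0 : ℝ) < 19 / 3 by norm_num)
  linarith [thirty_nine_add_log_pi_add_log_le]

end Constants

/-- The leading coefficient of the lower bound given by the variance method, at a real
dimension. -/
noncomputable def varianceCoeff (x : ℝ) : ℝ :=
  1 / √(x + 2) * √(4 / π) * Gamma (x / 2 + 1) ^ (1 / x)

/-- The leading coefficient of the lower bound given by the first moment method, at a real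
dimension; `Γ(x + 1)` interpolates the factorial. -/
noncomputable def firstMomentCoeff (x : ℝ) : ℝ :=
  1 / (x + 1) * √(π / 2) * Gamma (x + 1) ^ (1 / x)

/-- The leading coefficient of the lower bound given by the third moment method, at a real
dimension. -/
noncomputable def thirdMomentCoeff (x : ℝ) : ℝ :=
  (x + 3) ^ (-1 / 3 : ℝ) * (π / 8) ^ (1 / 6 : ℝ) * Gamma ((x + 3) / 3) ^ (1 / x) / Gamma (4 / 3)

section Logarithms

variable {x : ℝ}

lemma varianceCoeff_pos (hx : 0 < x) : 0 < varianceCoeff x := by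
  have := Gamma_pos_of_pos (show 0 < x / 2 + 1 by positivity)
  unfold varianceCoeff
  positivity

lemma firstMomentCoeff_pos (hx : 0 < x) : 0 < firstMomentCoeff x := by
  have := Gamma_pos_of_pos (show 0 < x + 1 by positivity)
  unfold firstMomentCoeff
  positivity

lemma thirdMomentCoeff_pos (hx : 0 < x) : 0 < thirdMomentCoeff x := by
  have := Gamma_pos_of_pos (show 0 < (x + 3) / 3 by positivity)
  have := Gamma_pos_of_pos (show (0 : ℝ) < 4 / 3 by positivity)
  unfold thirdMomentCoeff
  positivity

lemma two_mul_mul_log_varianceCoeff (hx : 0 < x) :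
    2 * x * log (varianceCoeff x) =
      x * (2 * log 2 - log π - log (x + 2)) + 2 * log (Gamma (x / 2 + 1)) := by
  have hΓ := Gamma_pos_of_pos (show 0 < x / 2 + 1 by positivity)
  have h4 : log 4 = 2 * log 2 := by rw [← log_rpow two_pos]; norm_num
  rw [varianceCoeff, log_mul (by positivity) (by positivity),
    log_mul (by positivity) (by positivity), one_div, log_inv,
    log_sqrt (by positivity), log_sqrt (by positivity),
    log_div four_ne_zero pi_ne_zero, log_rpow hΓ, h4]
  field_simp
  ring

lemma two_mul_mul_log_firstMomentCoeff (hx : 0 < x) :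
    2 * x * log (firstMomentCoeff x) =
      x * (log π - log 2 - 2 * log (x + 1)) + 2 * log (Gamma (x + 1)) := by
  have hΓ := Gamma_pos_of_pos (show 0 < x + 1 by positivity)
  rw [firstMomentCoeff, log_mul (by positivity) (by positivity),
    log_mul (by positivity) (by positivity), one_div, log_inv,
    log_sqrt (by positivity), log_div pi_ne_zero two_ne_zero, log_rpow hΓ]
  field_simp
  ring

lemma six_mul_mul_log_thirdMomentCoeff (hx : 0 < x) :
    6 * x * log (thirdMomentCoeff x) =
      x * (log π - 3 * log 2 - 2 * log (x + 3) - 6 * log (Gamma (4 / 3)))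
        + 6 * log (Gamma ((x + 3) / 3)) := by
  have hΓ := Gamma_pos_of_pos (show 0 < (x + 3) / 3 by positivity)
  have := Gamma_pos_of_pos (show (0 : ℝ) < 4 / 3 by positivity)
  have h8 : log 8 = 3 * log 2 := by rw [← log_rpow two_pos]; norm_num
  rw [thirdMomentCoeff, log_div (by positivity) (by positivity),
    log_mul (by positivity) (by positivity),
    log_mul (by positivity) (by positivity), log_rpow (by positivity),
    log_rpow (by positivity), log_div pi_ne_zero (by norm_num),
    log_rpow hΓ, h8]
  field_simp
  ring

lemma two_mul_mul_log_varianceCoeff_sub_log_firstMomentCoeff (hx : 0 < x) :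
    2 * x * (log (varianceCoeff x) - log (firstMomentCoeff x)) =
      x * (1 - 2 * log (π / 2)) - log 2 - log ((x + 1) / (x + 2))
        + 2 * stirlingRemainder (x / 2 + 1) - 2 * stirlingRemainder (x + 1) := by
  have hs : x / 2 + 1 = (x + 2) / 2 := by ring
  rw [mul_sub, two_mul_mul_log_varianceCoeff hx, two_mul_mul_log_firstMomentCoeff hx,
    log_Gamma_eq_add_stirlingRemainder (x / 2 + 1), log_Gamma_eq_add_stirlingRemainder (x + 1),
    log_div pi_ne_zero two_ne_zero, log_div (by positivity) (by positivity),
    hs, log_div (by positivity) two_ne_zero]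
  ring

lemma six_mul_mul_log_varianceCoeff_sub_log_thirdMomentCoeff (hx : 0 < x) :
    6 * x * (log (varianceCoeff x) - log (thirdMomentCoeff x)) =
      x * (6 * log 2 + 2 * log 3 + 6 * log (Gamma (4 / 3)) - 1 - 4 * log π)
        - 3 * log (2 * (x + 3) / (3 * (x + 2)))
        + 6 * stirlingRemainder (x / 2 + 1) - 6 * stirlingRemainder ((x + 3) / 3) := by
  have hs : x / 2 + 1 = (x + 2) / 2 := by ring
  have hvar := two_mul_mul_log_varianceCoeff hx
  have hthird := six_mul_mul_log_thirdMomentCoeff hx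
  rw [log_Gamma_eq_add_stirlingRemainder (x / 2 + 1), hs,
    log_div (by positivity) two_ne_zero] at hvar
  rw [log_Gamma_eq_add_stirlingRemainder ((x + 3) / 3),
    log_div (by positivity) three_ne_zero] at hthird
  rw [log_div (by positivity) (by positivity), log_mul two_ne_zero (by positivity),
    log_mul three_ne_zero (by positivity), hs]
  linear_combination 3 * hvar - hthird

end Logarithms

theorem firstMomentCoeff_le_varianceCoeff {x : ℝ} (hx : 6 ≤ x) :
    firstMomentCoeff x ≤ varianceCoeff x := by
  have hx₀ : 0 < x := by linarith
  rw [← log_le_log_iff (firstMomentCoeff_pos hx₀) (varianceCoeff_pos hx₀), ← sub_nonneg]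
  refine nonneg_of_mul_nonneg_right ?_ (show 0 < 2 * x by positivity)
  rw [two_mul_mul_log_varianceCoeff_sub_log_firstMomentCoeff hx₀]
  have hslope : x * (3 / 31) ≤ x * (1 - 2 * log (π / 2)) := by
    gcongr
    linarith [log_pi_div_two_le]
  have hlog : log ((x + 1) / (x + 2)) ≤ (x + 1) / (x + 2) - 1 :=
    log_le_sub_one_of_pos (by positivity)
  have hlower := one_div_le_stirlingRemainder (show 0 < x / 2 + 1 by positivity)
  have hupper := stirlingRemainder_le_one_div (show 0 < x + 1 by positivity)
  have hrational : 0.6931471808 + ((x + 1) / (x + 2) - 1) + 2 * (1 / (12 * (x + 1)))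
      ≤ x * (3 / 31) + 2 * (1 / (12 * (x / 2 + 1) + 6)) := by
    obtain ⟨y, hy, rfl⟩ : ∃ y : ℝ, 0 ≤ y ∧ x = y + 6 := ⟨x - 6, by linarith, by ring⟩
    rw [← sub_nonneg]
    field_simp
    ring_nf
    positivity
  linarith [log_two_lt_d9]

theorem thirdMomentCoeff_le_varianceCoeff {x : ℝ} (hx : 2 ≤ x) :
    thirdMomentCoeff x ≤ varianceCoeff x := by
  have hx₀ : 0 < x := by linarith
  rw [← log_le_log_iff (thirdMomentCoeff_pos hx₀) (varianceCoeff_pos hx₀), ← sub_nonneg]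
  refine nonneg_of_mul_nonneg_right ?_ (show 0 < 6 * x by positivity)
  rw [six_mul_mul_log_varianceCoeff_sub_log_thirdMomentCoeff hx₀]
  have hslope : 0 ≤ x * (6 * log 2 + 2 * log 3 + 6 * log (Gamma (4 / 3)) - 1 - 4 * log π) :=
    mul_nonneg hx₀.le (by linarith [one_add_four_mul_log_pi_le])
  have hlog : log (2 * (x + 3) / (3 * (x + 2))) ≤ 2 * (x + 3) / (3 * (x + 2)) - 1 :=
    log_le_sub_one_of_pos (by positivity)
  have hlower := stirlingRemainder_pos (show 0 < x / 2 + 1 by positivity)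
  have hupper := stirlingRemainder_le_one_div (show 0 < (x + 3) / 3 by positivity)
  have hrational : 3 * (2 * (x + 3) / (3 * (x + 2)) - 1) + 6 * (1 / (12 * ((x + 3) / 3))) ≤ 0 := by
    obtain ⟨y, hy, rfl⟩ : ∃ y : ℝ, 0 ≤ y ∧ x = y + 2 := ⟨x - 2, by linarith, by ring⟩
    rw [← neg_nonneg]
    field_simp
    ring_nf
    positivity
  linarith

theorem variance_coeff_dominates_general {x : ℝ} (hx : 6 ≤ x) :
    firstMomentCoeff x ≤ varianceCoeff x ∧ thirdMomentCoeff x ≤ varianceCoeff x :=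
  ⟨firstMomentCoeff_le_varianceCoeff hx, thirdMomentCoeff_le_varianceCoeff (by linarith)⟩

end

/-- For `k ≥ 7`, the variance coefficient dominates the first-moment and
third-moment coefficients. -/
theorem variance_coeff_dominates (k : ℕ) (hk : 7 ≤ k) :
    (1 / Real.sqrt ((k : ℝ) + 2)) * Real.sqrt (4 / Real.pi) *
          Real.Gamma ((k : ℝ) / 2 + 1) ^ ((1 : ℝ) / k)
        ≥ (1 / ((k : ℝ) + 1)) * Real.sqrt (Real.pi / 2) *
            (k.factorial : ℝ) ^ ((1 : ℝ) / k) ∧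
    (1 / Real.sqrt ((k : ℝ) + 2)) * Real.sqrt (4 / Real.pi) *
          Real.Gamma ((k : ℝ) / 2 + 1) ^ ((1 : ℝ) / k)
        ≥ ((k : ℝ) + 3) ^ (-(1 : ℝ) / 3) * (Real.pi / 8) ^ ((1 : ℝ) / 6) *
            Real.Gamma (((k : ℝ) + 3) / 3) ^ ((1 : ℝ) / k) / Real.Gamma (4 / 3) := by
  simpa only [varianceCoeff, firstMomentCoeff, thirdMomentCoeff, Real.Gamma_nat_eq_factorial] using
    variance_coeff_dominates_general (x := k) (by exact_mod_cast (by lia : 6 ≤ k))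
end
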